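/- arXiv:2307.02941 — 3 statements merged into one kernel-verified Lean document; each statement's English description precedes it below -/
import Mathlib

section
/- Suppose G is connected and ‖Δ‖ < λ₂/(2√5 · √(rn)). Then: (i) the SDP relaxation min{⟨L̂, X⟩ : X positive semidefinite, SBD(X) = I_{rn}} has a unique optimal solution X̂, and rank(X̂) = r; (ii) the unrelaxed problem min{⟨L̂, W Wᵀ⟩ : W ∈ ℝ^{rn×r} with all r×r blocks W_i orthogonal} has a solution Ẑ that is unique up to right-multiplication by an element of O(r); (iii) X̂ = Ẑ Ẑᵀ. -/
open Matrix MeasureTheory ProbabilityTheory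
open scoped Kronecker BigOperators

namespace SyncPaper

variable {α : Type*}

/-- The `i`-th `r × p` row-block of a block matrix `Y ∈ α^{rn × p}`. -/
def blk {n r p : ℕ} (Y : Matrix (Fin n × Fin r) (Fin p) α) (i : Fin n) :
    Matrix (Fin r) (Fin p) α :=
  Matrix.of fun a b => Y (i, a) b

/-- `Y` is feasible: every `r × p` row-block has orthonormal rows. -/
def Feasible {n r p : ℕ} (Y : Matrix (Fin n × Fin r) (Fin p) ℝ) : Prop :=
  ∀ i, blk Y i * (blk Y i)ᵀ = 1

/-- Symmetric block-diagonal projection: keeps the symmetric part of each `r × r`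
diagonal block and zeroes out all off-diagonal blocks. -/
noncomputable def SBD {n r : ℕ} (M : Matrix (Fin n × Fin r) (Fin n × Fin r) ℝ) :
    Matrix (Fin n × Fin r) (Fin n × Fin r) ℝ :=
  Matrix.of fun q q' => if q.1 = q'.1 then (M q q' + M q' q) / 2 else 0

/-- The matrix `S(Y) = L̂ − SBD(L̂ Y Yᵀ)`. -/
noncomputable def Smat {n r p : ℕ} (Lhat : Matrix (Fin n × Fin r) (Fin n × Fin r) ℝ)
    (Y : Matrix (Fin n × Fin r) (Fin p) ℝ) :
    Matrix (Fin n × Fin r) (Fin n × Fin r) ℝ :=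
  Lhat - SBD (Lhat * Y * Yᵀ)

/-- Second-order critical point of the rank-`p` problem `min ⟨L̂, Y Yᵀ⟩` over feasible `Y`. -/
def IsSecondOrderCritical {n r p : ℕ} (Lhat : Matrix (Fin n × Fin r) (Fin n × Fin r) ℝ)
    (Y : Matrix (Fin n × Fin r) (Fin p) ℝ) : Prop :=
  Feasible Y ∧ Smat Lhat Y * Y = 0 ∧
    ∀ Ydot : Matrix (Fin n × Fin r) (Fin p) ℝ,
      (∀ i, blk Ydot i * (blk Y i)ᵀ + blk Y i * (blk Ydot i)ᵀ = 0) →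
      0 ≤ (Smat Lhat Y * Ydot * Ydotᵀ).trace

/-- The stacked ground truth `Z ∈ ℝ^{rn × r}`. -/
def Zstack {n r : ℕ} (Zb : Fin n → Matrix (Fin r) (Fin r) ℝ) :
    Matrix (Fin n × Fin r) (Fin r) ℝ :=
  Matrix.of fun q b => Zb q.1 q.2 b

/-- The block-diagonal matrix `D` with diagonal blocks `Z_1, …, Z_n`. -/
def Dmat {n r : ℕ} (Zb : Fin n → Matrix (Fin r) (Fin r) ℝ) :
    Matrix (Fin n × Fin r) (Fin n × Fin r) ℝ :=
  Matrix.of fun q q' => if q.1 = q'.1 then Zb q.1 q.2 q'.2 else 0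

/-- `L_Z = D (L ⊗ I_r) Dᵀ`. -/
def LZmat {n r : ℕ} (L : Matrix (Fin n) (Fin n) ℝ) (Zb : Fin n → Matrix (Fin r) (Fin r) ℝ) :
    Matrix (Fin n × Fin r) (Fin n × Fin r) ℝ :=
  Dmat Zb * (L ⊗ₖ (1 : Matrix (Fin r) (Fin r) ℝ)) * (Dmat Zb)ᵀ

/-- The ℓ₂→ℓ₂ operator norm of a matrix. -/
noncomputable def opNorm {m m' : Type*} [Fintype m] [Fintype m'] [DecidableEq m']
    (M : Matrix m m' ℝ) : ℝ :=
  ‖(Matrix.toEuclideanLin (𝕜 := ℝ) (m := m) (n := m')).trans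
      LinearMap.toContinuousLinearMap M‖

/-- The second-smallest eigenvalue of a connected graph Laplacian, via the variational
(Courant–Fischer) characterization: the minimum of the quadratic form over unit vectors
orthogonal to the all-ones vector. -/
noncomputable def lam2 {n : ℕ} (L : Matrix (Fin n) (Fin n) ℝ) : ℝ :=
  sInf {t : ℝ | ∃ x : Fin n → ℝ, (∑ i, x i = 0) ∧ (∑ i, (x i) ^ 2 = 1) ∧ t = x ⬝ᵥ (L *ᵥ x)}

/-- Squared Frobenius norm of a real matrix. -/
def frobSq {m m' : Type*} [Fintype m] [Fintype m'] (M : Matrix m m' ℝ) : ℝ :=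
  ∑ i, ∑ j, (M i j) ^ 2

/-- The inner product `⟨A, B⟩ = tr(A Bᵀ)`. -/
def ip {m : Type*} [Fintype m] (A B : Matrix m m ℝ) : ℝ := (A * Bᵀ).trace

/-- Feasibility for the SDP relaxation. -/
def SDPFeasible {n r : ℕ} (X : Matrix (Fin n × Fin r) (Fin n × Fin r) ℝ) : Prop :=
  X.PosSemidef ∧ SBD X = 1

end SyncPaper

namespace SyncPaper

/-!
Conjugation by `D` turns the cost into `M = L ⊗ I_r - Δ`. By compactness the unrelaxed problem has a
minimizer `Y`. Rotating one block of `Y` at a time shows that the diagonal blocks of `M Y Yᵀ` are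
symmetric, so `S = M - SBD(M Y Yᵀ)` satisfies `S Y = 0`; moreover `⟨M, X⟩ - ⟨M, Y Yᵀ⟩ = ⟨S, X⟩` for
every `X` feasible for the relaxation. Hence it suffices that `S` is positive definite on the block
vectors `X` with `∑ X_i = 0`, which then form a complement of the range of `Y`.

Comparing `Y` with the stack of copies of one of its own blocks, best among all `n` choices, bounds
the Dirichlet energy of `Y` by `λ₂ / 2` as soon as `4 √(rn) ‖Δ‖ ≤ λ₂`. For `P Pᵀ = Q Qᵀ = I` one has
`⟨X Xᵀ P, P - Q⟩ = ‖Xᵀ (P - Q)‖² / 2`, so the noiseless part of `SBD(M Y Yᵀ)` costs at most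
`‖X‖²` times that energy, that is half of the `λ₂ ‖X‖²` gained from `L ⊗ I_r`. The noise costs
at most `(1 + √(rn)) ‖Δ‖ ‖X‖²`, less than the other half because `4 < 2 √5` and `rn ≥ 1`.
-/

section OpNorm

open scoped Matrix.Norms.L2Operator

variable {m m' : Type*} [Fintype m] [Fintype m'] [DecidableEq m']

lemma opNorm_eq_l2_norm (M : Matrix m m' ℝ) : opNorm M = ‖M‖ := rfl

lemma opNorm_nonneg (M : Matrix m m' ℝ) : 0 ≤ opNorm M := norm_nonneg _

lemma norm_mulVec_le_opNorm (M : Matrix m m' ℝ) (v : m' → ℝ) :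
    ‖WithLp.toLp 2 (M *ᵥ v)‖ ≤ opNorm M * ‖WithLp.toLp 2 v‖ :=
  Matrix.l2_opNorm_mulVec M (WithLp.toLp 2 v)

lemma abs_dotProduct_mulVec_le_opNorm (M : Matrix m m' ℝ) (v : m → ℝ) (w : m' → ℝ) :
    |v ⬝ᵥ M *ᵥ w| ≤ opNorm M * (‖WithLp.toLp 2 v‖ * ‖WithLp.toLp 2 w‖) := by
  have h := abs_real_inner_le_norm (WithLp.toLp 2 v) (WithLp.toLp 2 (M *ᵥ w))
  rw [EuclideanSpace.inner_toLp_toLp, star_trivial, dotProduct_comm] at h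
  calc |v ⬝ᵥ M *ᵥ w| ≤ ‖WithLp.toLp 2 v‖ * (opNorm M * ‖WithLp.toLp 2 w‖) :=
        h.trans (by gcongr; exact norm_mulVec_le_opNorm M w)
    _ = _ := by ring

lemma opNorm_orthogonal_conj [DecidableEq m] {D : Matrix m m ℝ} (hD : D * Dᵀ = 1)
    (M : Matrix m m ℝ) : opNorm (Dᵀ * M * D) = opNorm M := by
  have hD' : D ∈ unitary (Matrix m m ℝ) := by
    rw [Unitary.mem_iff, star_eq_conjTranspose, conjTranspose_eq_transpose_of_trivial]
    exact ⟨mul_eq_one_comm.1 hD, hD⟩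
  rw [← conjTranspose_eq_transpose_of_trivial, ← star_eq_conjTranspose]
  simp only [opNorm_eq_l2_norm]
  rw [CStarRing.norm_mul_mem_unitary _ hD', CStarRing.norm_mem_unitary_mul _ (Unitary.star_mem hD')]

end OpNorm

open scoped Matrix.Norms.Frobenius

section Frobenius

variable {l m k : Type*} [Fintype l] [Fintype m] [Fintype k]

lemma frobenius_norm_sq (A : Matrix m k ℝ) : ‖A‖ ^ 2 = ∑ i, ∑ j, A i j ^ 2 := by
  rw [frobenius_norm_def, ← Real.sqrt_eq_rpow, Real.sq_sqrt (by positivity)]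
  simp only [Real.rpow_two, Real.norm_eq_abs, sq_abs]

lemma trace_transpose_mul_self (A : Matrix m k ℝ) : (Aᵀ * A).trace = ‖A‖ ^ 2 := by
  rw [frobenius_norm_sq, Finset.sum_comm]
  simp only [Matrix.trace, Matrix.diag, Matrix.mul_apply, Matrix.transpose_apply, sq]

lemma trace_mul_transpose_self (A : Matrix m k ℝ) : (A * Aᵀ).trace = ‖A‖ ^ 2 := by
  rw [trace_mul_comm, trace_transpose_mul_self]

lemma trace_transpose_mul_comm {R : Type*} [CommSemiring R] (A B : Matrix m k R) :
    (Aᵀ * B).trace = (Bᵀ * A).trace := by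
  rw [← trace_transpose, transpose_mul, transpose_transpose]

lemma norm_sub_sq_eq (A B : Matrix m k ℝ) :
    ‖A - B‖ ^ 2 = ‖A‖ ^ 2 - 2 * (Aᵀ * B).trace + ‖B‖ ^ 2 := by
  simp only [← trace_transpose_mul_self, transpose_sub, Matrix.sub_mul, Matrix.mul_sub, trace_sub]
  rw [trace_transpose_mul_comm B A]
  ring

lemma frobenius_norm_sq_eq_sum_col (A : Matrix m k ℝ) :
    ‖A‖ ^ 2 = ∑ j, ‖WithLp.toLp 2 (A.col j)‖ ^ 2 := by
  simp only [EuclideanSpace.norm_sq_eq, frobenius_norm_sq, Matrix.col_apply, Real.norm_eq_abs,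
    sq_abs]
  exact Finset.sum_comm

lemma abs_trace_transpose_mul_mul_le [DecidableEq m] (M : Matrix l m ℝ) (X : Matrix l k ℝ)
    (Y : Matrix m k ℝ) : |(Xᵀ * M * Y).trace| ≤ opNorm M * (‖X‖ * ‖Y‖) := by
  have hcols : (Xᵀ * M * Y).trace = ∑ j, X.col j ⬝ᵥ M *ᵥ Y.col j := by
    rw [Matrix.mul_assoc]
    rfl
  have hcs := Real.sum_mul_le_sqrt_mul_sqrt Finset.univ
    (fun j => ‖WithLp.toLp 2 (X.col j)‖) (fun j => ‖WithLp.toLp 2 (Y.col j)‖)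
  rw [← frobenius_norm_sq_eq_sum_col, ← frobenius_norm_sq_eq_sum_col,
    Real.sqrt_sq (norm_nonneg _), Real.sqrt_sq (norm_nonneg _)] at hcs
  calc |(Xᵀ * M * Y).trace|
      ≤ ∑ j, opNorm M * (‖WithLp.toLp 2 (X.col j)‖ * ‖WithLp.toLp 2 (Y.col j)‖) := by
        rw [hcols]
        exact (Finset.abs_sum_le_sum_abs _ _).trans
          (Finset.sum_le_sum fun j _ => abs_dotProduct_mulVec_le_opNorm M _ _)
    _ ≤ opNorm M * (‖X‖ * ‖Y‖) := by
        rw [← Finset.mul_sum]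
        exact mul_le_mul_of_nonneg_left hcs (opNorm_nonneg M)

end Frobenius

variable {n r p k : ℕ} {α : Type*}

section Blocks

lemma blk_ext {Y W : Matrix (Fin n × Fin r) (Fin p) α} (h : ∀ i, blk Y i = blk W i) : Y = W := by
  ext ⟨i, a⟩ c
  exact congrFun (congrFun (h i) a) c

lemma blk_mul [NonUnitalNonAssocSemiring α] (Y : Matrix (Fin n × Fin r) (Fin p) α)
    (C : Matrix (Fin p) (Fin k) α) (i : Fin n) : blk (Y * C) i = blk Y i * C := rfl

lemma transpose_mul_eq_sum_blk [NonUnitalNonAssocSemiring α]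
    (Y : Matrix (Fin n × Fin r) (Fin p) α) (W : Matrix (Fin n × Fin r) (Fin k) α) :
    Yᵀ * W = ∑ i, (blk Y i)ᵀ * blk W i := by
  ext a b
  simp only [Matrix.sum_apply, Matrix.mul_apply, Fintype.sum_prod_type]
  rfl

lemma norm_sq_eq_sum_blk (Y : Matrix (Fin n × Fin r) (Fin p) ℝ) :
    ‖Y‖ ^ 2 = ∑ i, ‖blk Y i‖ ^ 2 := by
  simp only [← trace_transpose_mul_self, transpose_mul_eq_sum_blk, trace_sum]

/-- The `i`-th `r × r` diagonal block `X_ii` of an `rn × rn` matrix. -/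
def diagBlk (X : Matrix (Fin n × Fin r) (Fin n × Fin r) α) (i : Fin n) :
    Matrix (Fin r) (Fin r) α :=
  X.submatrix (Prod.mk i) (Prod.mk i)

lemma diagBlk_mul_transpose [NonUnitalNonAssocSemiring α]
    (Y W : Matrix (Fin n × Fin r) (Fin p) α) (i : Fin n) :
    diagBlk (Y * Wᵀ) i = blk Y i * (blk W i)ᵀ := rfl

lemma blk_Dmat_mul (Z : Fin n → Matrix (Fin r) (Fin r) ℝ) (Y : Matrix (Fin n × Fin r) (Fin p) ℝ)
    (i : Fin n) : blk (Dmat Z * Y) i = Z i * blk Y i := by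
  ext a c
  simp [blk, Dmat, Matrix.mul_apply, Fintype.sum_prod_type]

lemma Dmat_mul_transpose {Z : Fin n → Matrix (Fin r) (Fin r) ℝ} (hZ : ∀ i, Z i * (Z i)ᵀ = 1) :
    Dmat Z * (Dmat Z)ᵀ = 1 := by
  ext ⟨i, a⟩ ⟨j, b⟩
  have hij := congrFun (congrFun (hZ i) a) b
  by_cases h : i = j
  · subst h
    simpa [Dmat, Matrix.mul_apply, Fintype.sum_prod_type, Matrix.one_apply] using hij
  · simp [Dmat, Matrix.mul_apply, Fintype.sum_prod_type, h]

lemma diagBlk_Dmat_conj (Z : Fin n → Matrix (Fin r) (Fin r) ℝ)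
    (X : Matrix (Fin n × Fin r) (Fin n × Fin r) ℝ) (i : Fin n) :
    diagBlk (Dmat Z * X * (Dmat Z)ᵀ) i = Z i * diagBlk X i * (Z i)ᵀ := by
  ext a b
  simp [diagBlk, Dmat, Matrix.mul_apply, Fintype.sum_prod_type]

lemma SBD_eq_Dmat {A : Matrix (Fin n × Fin r) (Fin n × Fin r) ℝ}
    (hA : ∀ i, (diagBlk A i)ᵀ = diagBlk A i) : SBD A = Dmat (diagBlk A) := by
  ext ⟨i, a⟩ ⟨j, b⟩
  by_cases h : i = j
  · subst h
    have hab : A (i, b) (i, a) = A (i, a) (i, b) := congrFun (congrFun (hA i) a) b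
    simp [SBD, Dmat, diagBlk, hab]
  · simp [SBD, Dmat, h]

lemma SBD_transpose (A : Matrix (Fin n × Fin r) (Fin n × Fin r) ℝ) : (SBD A)ᵀ = SBD A := by
  ext q q'
  simp only [SBD, transpose_apply, of_apply, eq_comm (a := q'.1), add_comm (A q' q)]

lemma trace_SBD_mul (A B : Matrix (Fin n × Fin r) (Fin n × Fin r) ℝ) :
    (SBD A * B).trace = (A * SBD B).trace := by
  have hswap : ∑ q, ∑ q', (if q.1 = q'.1 then A q' q * B q' q else 0) =
      ∑ q, ∑ q', (if q.1 = q'.1 then A q q' * B q q' else 0) := by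
    rw [Finset.sum_comm]
    simp only [eq_comm]
  calc (SBD A * B).trace
      = (∑ q, ∑ q', (if q.1 = q'.1 then A q q' * B q' q else 0) +
          ∑ q, ∑ q', (if q.1 = q'.1 then A q' q * B q' q else 0)) / 2 := by
        simp only [Matrix.trace, Matrix.diag, Matrix.mul_apply, SBD, of_apply,
          ← Finset.sum_add_distrib, Finset.sum_div]
        refine Finset.sum_congr rfl fun q _ => Finset.sum_congr rfl fun q' _ => ?_
        split_ifs <;> ring
    _ = (A * SBD B).trace := by
        rw [hswap]
        simp only [Matrix.trace, Matrix.diag, Matrix.mul_apply, SBD, of_apply,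
          ← Finset.sum_add_distrib, Finset.sum_div]
        refine Finset.sum_congr rfl fun q _ => Finset.sum_congr rfl fun q' _ => ?_
        simp only [eq_comm (a := q'.1)]
        split_ifs <;> ring

lemma SBD_eq_one_iff {X : Matrix (Fin n × Fin r) (Fin n × Fin r) ℝ} (hX : Xᵀ = X) :
    SBD X = 1 ↔ ∀ i, diagBlk X i = 1 := by
  have hdiag : ∀ i, (diagBlk X i)ᵀ = diagBlk X i := fun i => congrArg (diagBlk · i) hX
  rw [SBD_eq_Dmat hdiag]
  refine ⟨fun h i => ?_, fun h => ?_⟩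
  · ext a b
    simpa [Dmat, diagBlk, Matrix.one_apply] using congrFun (congrFun h (i, a)) (i, b)
  · ext ⟨i, a⟩ ⟨j, b⟩
    simp [Dmat, h, Matrix.one_apply, Prod.mk.injEq, ite_and]

end Blocks

section Feasible

/-- The block matrix all of whose `r × p` row-blocks equal `A`. -/
def constStack (n : ℕ) (A : Matrix (Fin r) (Fin p) α) : Matrix (Fin n × Fin r) (Fin p) α :=
  Matrix.of fun q b => A q.2 b

lemma blk_constStack (A : Matrix (Fin r) (Fin p) α) (i : Fin n) : blk (constStack n A) i = A := rfl

lemma feasible_constStack {A : Matrix (Fin r) (Fin p) ℝ} (hA : A * Aᵀ = 1) :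
    Feasible (constStack n A) := fun _ => hA

lemma Feasible.norm_sq_eq {Y : Matrix (Fin n × Fin r) (Fin p) ℝ} (hY : Feasible Y) :
    ‖Y‖ ^ 2 = r * n := by
  have hblk (i : Fin n) : ‖blk Y i‖ ^ 2 = r := by
    rw [← trace_mul_transpose_self, hY i, trace_one, Fintype.card_fin]
  simp [norm_sq_eq_sum_blk, hblk, mul_comm]

lemma Feasible.norm_eq {Y : Matrix (Fin n × Fin r) (Fin p) ℝ} (hY : Feasible Y) :
    ‖Y‖ = √(r * n) := by
  rw [← hY.norm_sq_eq, Real.sqrt_sq (norm_nonneg Y)]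

lemma isCompact_setOf_feasible :
    IsCompact {Y : Matrix (Fin n × Fin r) (Fin p) ℝ | Feasible Y} := by
  refine Metric.isCompact_of_isClosed_isBounded ?_ ?_
  · have hblk (i : Fin n) : Continuous fun Y : Matrix (Fin n × Fin r) (Fin p) ℝ => blk Y i :=
      continuous_matrix fun a b => continuous_id.matrix_elem (i, a) b
    simp only [Feasible, Set.ofPred_forall]
    exact isClosed_iInter fun i =>
      isClosed_eq ((hblk i).matrix_mul (hblk i).matrix_transpose) continuous_const
  · refine (Metric.isBounded_closedBall (x := 0) (r := √(r * n))).subset fun Y hY => ?_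
    rw [mem_closedBall_zero_iff]
    exact (Feasible.norm_eq hY).le

lemma exists_feasible_isMinOn (M : Matrix (Fin n × Fin r) (Fin n × Fin r) ℝ) :
    ∃ Y : Matrix (Fin n × Fin r) (Fin r) ℝ, Feasible Y ∧
      IsMinOn (fun W : Matrix (Fin n × Fin r) (Fin r) ℝ => ip M (W * Wᵀ)) {W | Feasible W} Y := by
  refine isCompact_setOf_feasible.exists_isMinOn
    ⟨constStack n 1, feasible_constStack (by rw [transpose_one, Matrix.mul_one])⟩ ?_
  exact (continuous_const.matrix_mul
    (continuous_id.matrix_mul continuous_id.matrix_transpose).matrix_transpose).matrix_trace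
    |>.continuousOn

lemma Feasible.transpose_blk_mul_blk {Y : Matrix (Fin n × Fin r) (Fin r) ℝ} (hY : Feasible Y)
    (i : Fin n) : (blk Y i)ᵀ * blk Y i = 1 :=
  mul_eq_one_comm.1 (hY i)

lemma Feasible.Dmat_mul {Z : Fin n → Matrix (Fin r) (Fin r) ℝ} (hZ : ∀ i, Z i * (Z i)ᵀ = 1)
    {Y : Matrix (Fin n × Fin r) (Fin p) ℝ} (hY : Feasible Y) : Feasible (Dmat Z * Y) := fun i => by
  rw [blk_Dmat_mul, transpose_mul, Matrix.mul_assoc, ← Matrix.mul_assoc (blk Y i), hY i,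
    Matrix.one_mul, hZ i]

lemma Feasible.rank_mul_transpose [NeZero n] {Y : Matrix (Fin n × Fin r) (Fin r) ℝ}
    (hY : Feasible Y) : (Y * Yᵀ).rank = r := by
  have hYY : Yᵀ * Y = (n : ℝ) • 1 := by
    simp [transpose_mul_eq_sum_blk, hY.transpose_blk_mul_blk, Nat.cast_smul_eq_nsmul]
  rw [rank_self_mul_transpose, ← rank_transpose_mul_self, hYY, rank_of_isUnit, Fintype.card_fin]
  exact isUnit_one.smul (Units.mk0 (n : ℝ) (NeZero.ne _))

lemma Feasible.sdpFeasible_mul_transpose {Y : Matrix (Fin n × Fin r) (Fin p) ℝ}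
    (hY : Feasible Y) : SDPFeasible (Y * Yᵀ) := by
  have hpsd := posSemidef_self_mul_conjTranspose Y
  rw [conjTranspose_eq_transpose_of_trivial] at hpsd
  exact ⟨hpsd, (SBD_eq_one_iff (by rw [transpose_mul, transpose_transpose])).2 hY⟩

lemma Feasible.exists_eq_mul_of_mul_transpose_eq [NeZero n]
    {W Y : Matrix (Fin n × Fin r) (Fin r) ℝ} (hW : Feasible W) (hY : Feasible Y)
    (h : W * Wᵀ = Y * Yᵀ) : ∃ Q : Matrix (Fin r) (Fin r) ℝ, Q * Qᵀ = 1 ∧ W = Y * Q := by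
  refine ⟨(blk Y 0)ᵀ * blk W 0, ?_, ?_⟩
  · rw [transpose_mul, transpose_transpose, Matrix.mul_assoc, ← Matrix.mul_assoc (blk W 0), hW 0,
      Matrix.one_mul, hY.transpose_blk_mul_blk]
  · have hcol : W * (blk W 0)ᵀ = Y * (blk Y 0)ᵀ := by
      ext q b
      exact congrFun (congrFun h q) (0, b)
    rw [← Matrix.mul_assoc, ← hcol, Matrix.mul_assoc, hW.transpose_blk_mul_blk, Matrix.mul_one]

lemma SDPFeasible.transpose_eq {X : Matrix (Fin n × Fin r) (Fin n × Fin r) ℝ}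
    (hX : SDPFeasible X) : Xᵀ = X := by
  rw [← conjTranspose_eq_transpose_of_trivial, hX.1.isHermitian.eq]

lemma SDPFeasible.diagBlk_eq_one {X : Matrix (Fin n × Fin r) (Fin n × Fin r) ℝ}
    (hX : SDPFeasible X) (i : Fin n) : diagBlk X i = 1 :=
  (SBD_eq_one_iff hX.transpose_eq).1 hX.2 i

lemma ip_mul_transpose {m l : Type*} [Fintype m] [Fintype l] (M : Matrix m m ℝ)
    (W : Matrix m l ℝ) : ip M (W * Wᵀ) = (Wᵀ * M * W).trace := by
  rw [ip, transpose_mul, transpose_transpose, ← Matrix.mul_assoc, trace_mul_comm,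
    ← Matrix.mul_assoc]

end Feasible

section FirstOrder

variable {m : Type*} [Fintype m]

lemma trace_transpose_add_mul_mul_add {l R : Type*} [Fintype l] [CommRing R] {M : Matrix m m R}
    (hM : Mᵀ = M) (Y U : Matrix m l R) : ((Y + U)ᵀ * M * (Y + U)).trace =
      (Yᵀ * M * Y).trace + 2 * (Uᵀ * M * Y).trace + (Uᵀ * M * U).trace := by
  have hcross : (Yᵀ * M * U).trace = (Uᵀ * M * Y).trace := by
    rw [← trace_transpose]
    simp only [transpose_mul, transpose_transpose, hM, Matrix.mul_assoc]
  simp only [transpose_add, Matrix.add_mul, Matrix.mul_add, trace_add, hcross]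
  ring

variable [DecidableEq m]

lemma exp_mul_transpose_of_skew {K : Matrix m m ℝ} (hK : Kᵀ = -K) :
    NormedSpace.exp K * (NormedSpace.exp K)ᵀ = 1 := by
  rw [← exp_transpose, hK, ← exp_add_of_commute _ _ (Commute.neg_right (Commute.refl K)),
    add_neg_cancel, NormedSpace.exp_zero]

lemma transpose_eq_self_of_trace_le_trace_mul {C : Matrix m m ℝ}
    (hC : ∀ Q : Matrix m m ℝ, Q * Qᵀ = 1 → C.trace ≤ (Q * C).trace) : Cᵀ = C := by
  set K := Cᵀ - C with hKdef
  have hK : Kᵀ = -K := by rw [hKdef, transpose_sub, transpose_transpose, neg_sub]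
  have hderiv : HasDerivAt (fun t : ℝ => (NormedSpace.exp (t • K) * C).trace) (K * C).trace 0 := by
    have hexp := hasDerivAt_exp_smul_const (𝕂 := ℝ) K (0 : ℝ)
    rw [zero_smul, NormedSpace.exp_zero, Matrix.one_mul] at hexp
    exact (LinearMap.toContinuousLinearMap
      (traceLinearMap m ℝ ℝ ∘ₗ LinearMap.mulRight ℝ C)).hasFDerivAt.comp_hasDerivAt 0 hexp
  have hmin : IsLocalMin (fun t : ℝ => (NormedSpace.exp (t • K) * C).trace) 0 := by
    refine Filter.Eventually.of_forall fun t => ?_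
    simp only [zero_smul, NormedSpace.exp_zero, Matrix.one_mul]
    exact hC _ (exp_mul_transpose_of_skew (by rw [transpose_smul, hK, smul_neg]))
  have hKC : (K * C).trace = 0 := hmin.hasDerivAt_eq_zero hderiv
  have hKC' : (K * Cᵀ).trace = 0 := by
    rw [← trace_transpose, transpose_mul, transpose_transpose, hK, trace_mul_comm, Matrix.neg_mul,
      trace_neg, hKC, neg_zero]
  have hnorm : ‖K‖ ^ 2 = 0 := by
    rw [← trace_transpose_mul_self, hK, Matrix.neg_mul, trace_neg]
    nth_rw 2 [hKdef]
    rw [Matrix.mul_sub, trace_sub, hKC, hKC', sub_zero, neg_zero]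
  exact sub_eq_zero.1 (norm_eq_zero.1 (sq_eq_zero_iff.1 hnorm))

lemma blk_Zstack_single (i j : Fin n) (V : Matrix (Fin r) (Fin r) ℝ) :
    blk (Zstack (Pi.single i V)) j = if j = i then V else 0 :=
  Pi.single_apply i V j

lemma transpose_Zstack_single_mul (i : Fin n) (V : Matrix (Fin r) (Fin r) ℝ)
    (W : Matrix (Fin n × Fin r) (Fin p) ℝ) : (Zstack (Pi.single i V))ᵀ * W = Vᵀ * blk W i := by
  rw [transpose_mul_eq_sum_blk, Finset.sum_eq_single i]
  · rw [blk_Zstack_single, if_pos rfl]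
  · intro j _ hj
    rw [blk_Zstack_single, if_neg hj, transpose_zero, Matrix.zero_mul]
  · simp

lemma blk_mul_Zstack_single (M : Matrix (Fin n × Fin r) (Fin n × Fin r) ℝ) (i : Fin n)
    (V : Matrix (Fin r) (Fin r) ℝ) : blk (M * Zstack (Pi.single i V)) i = diagBlk M i * V := by
  ext a b
  simp only [blk, diagBlk, Zstack, Matrix.mul_apply, of_apply, submatrix_apply,
    Fintype.sum_prod_type]
  rw [Finset.sum_eq_single i (fun j _ hj => by simp [Pi.single_eq_of_ne hj]) (by simp)]
  simp only [Pi.single_eq_same]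

/-- The matrix obtained from `Y` by replacing its `i`-th block `Y_i` by `Q Y_i`, written as an
additive perturbation of `Y` so that quadratic forms in it can be expanded. -/
def rotateBlk (Y : Matrix (Fin n × Fin r) (Fin r) ℝ) (i : Fin n) (Q : Matrix (Fin r) (Fin r) ℝ) :
    Matrix (Fin n × Fin r) (Fin r) ℝ :=
  Y + Zstack (Pi.single i ((Q - 1) * blk Y i))

lemma blk_rotateBlk (Y : Matrix (Fin n × Fin r) (Fin r) ℝ) (i j : Fin n)
    (Q : Matrix (Fin r) (Fin r) ℝ) :
    blk (rotateBlk Y i Q) j = if j = i then Q * blk Y i else blk Y j := by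
  have hadd : blk (rotateBlk Y i Q) j =
      blk Y j + blk (Zstack (Pi.single i ((Q - 1) * blk Y i))) j := rfl
  rw [hadd, blk_Zstack_single]
  split_ifs with h
  · rw [h, Matrix.sub_mul, Matrix.one_mul, add_sub_cancel]
  · rw [add_zero]

lemma Feasible.rotateBlk {Y : Matrix (Fin n × Fin r) (Fin r) ℝ} (hY : Feasible Y) (i : Fin n)
    {Q : Matrix (Fin r) (Fin r) ℝ} (hQ : Q * Qᵀ = 1) : Feasible (rotateBlk Y i Q) := fun j => by
  rw [blk_rotateBlk]
  split_ifs
  · rw [transpose_mul, Matrix.mul_assoc, ← Matrix.mul_assoc (blk Y i), hY i, Matrix.one_mul, hQ]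
  · exact hY j

-- The objective is affine in `Q`: its quadratic part only involves `(Q - 1)(Q - 1)ᵀ = 2 - Q - Qᵀ`.
lemma ip_rotateBlk_sub {M : Matrix (Fin n × Fin r) (Fin n × Fin r) ℝ} (hM : Mᵀ = M)
    {Y : Matrix (Fin n × Fin r) (Fin r) ℝ} (hY : Feasible Y) (i : Fin n)
    {Q : Matrix (Fin r) (Fin r) ℝ} (hQ : Q * Qᵀ = 1) :
    ip M (rotateBlk Y i Q * (rotateBlk Y i Q)ᵀ) - ip M (Y * Yᵀ) =
      2 * ((Q - 1) * ((diagBlk (M * Y * Yᵀ) i)ᵀ - diagBlk M i)).trace := by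
  set V := (Q - 1) * blk Y i with hV
  have hlin : (Vᵀ * blk (M * Y) i).trace = ((Q - 1) * (diagBlk (M * Y * Yᵀ) i)ᵀ).trace := by
    rw [diagBlk_mul_transpose, trace_transpose_mul_comm, transpose_mul, transpose_transpose,
      trace_mul_comm, hV, Matrix.mul_assoc]
  have hVV : V * Vᵀ = 1 - Q + (1 - Qᵀ) := by
    rw [hV, transpose_mul, Matrix.mul_assoc, ← Matrix.mul_assoc (blk Y i), hY i, Matrix.one_mul,
      transpose_sub, transpose_one, Matrix.sub_mul, Matrix.mul_sub, Matrix.mul_one, hQ]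
    noncomm_ring
  have hQt : (Qᵀ * diagBlk M i).trace = (Q * diagBlk M i).trace := by
    have hdiag : (diagBlk M i)ᵀ = diagBlk M i := congrArg (diagBlk · i) hM
    rw [trace_transpose_mul_comm, hdiag, trace_mul_comm]
  have hquad : (Vᵀ * (diagBlk M i * V)).trace = -(2 * ((Q - 1) * diagBlk M i).trace) := by
    rw [← Matrix.mul_assoc, trace_mul_comm, ← Matrix.mul_assoc, hVV]
    simp only [Matrix.sub_mul, Matrix.add_mul, trace_sub, trace_add, Matrix.one_mul, hQt]
    ring
  rw [ip_mul_transpose, ip_mul_transpose, rotateBlk, ← hV, trace_transpose_add_mul_mul_add hM,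
    Matrix.mul_assoc (Zstack _)ᵀ M Y, Matrix.mul_assoc (Zstack _)ᵀ M (Zstack _),
    transpose_Zstack_single_mul, transpose_Zstack_single_mul, blk_mul_Zstack_single, hlin, hquad,
    Matrix.mul_sub, trace_sub]
  ring

lemma transpose_diagBlk_of_isMinOn {M : Matrix (Fin n × Fin r) (Fin n × Fin r) ℝ} (hM : Mᵀ = M)
    {Y : Matrix (Fin n × Fin r) (Fin r) ℝ} (hY : Feasible Y)
    (hmin : IsMinOn (fun W : Matrix (Fin n × Fin r) (Fin r) ℝ => ip M (W * Wᵀ))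
      {W | Feasible W} Y) (i : Fin n) :
    (diagBlk (M * Y * Yᵀ) i)ᵀ = diagBlk (M * Y * Yᵀ) i := by
  have hMi : (diagBlk M i)ᵀ = diagBlk M i := congrArg (diagBlk · i) hM
  have hsymm := transpose_eq_self_of_trace_le_trace_mul
    (C := (diagBlk (M * Y * Yᵀ) i)ᵀ - diagBlk M i) fun Q hQ => by
      have hle : ip M (Y * Yᵀ) ≤ ip M (rotateBlk Y i Q * (rotateBlk Y i Q)ᵀ) :=
        hmin (hY.rotateBlk i hQ)
      have hdiff := ip_rotateBlk_sub hM hY i hQ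
      rw [Matrix.sub_mul, trace_sub, Matrix.one_mul] at hdiff
      linarith
  rw [transpose_sub, transpose_transpose, hMi] at hsymm
  exact (sub_left_injective hsymm).symm

lemma Smat_mul_eq_zero_of_isMinOn {M : Matrix (Fin n × Fin r) (Fin n × Fin r) ℝ} (hM : Mᵀ = M)
    {Y : Matrix (Fin n × Fin r) (Fin r) ℝ} (hY : Feasible Y)
    (hmin : IsMinOn (fun W : Matrix (Fin n × Fin r) (Fin r) ℝ => ip M (W * Wᵀ))
      {W | Feasible W} Y) : Smat M Y * Y = 0 := by
  rw [Smat, SBD_eq_Dmat (transpose_diagBlk_of_isMinOn hM hY hmin), Matrix.sub_mul, sub_eq_zero]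
  refine blk_ext fun i => ?_
  rw [blk_Dmat_mul, diagBlk_mul_transpose, Matrix.mul_assoc, hY.transpose_blk_mul_blk,
    Matrix.mul_one]

end FirstOrder

section Laplacian

lemma lam2_mul_le (L : Matrix (Fin n) (Fin n) ℝ) {u : Fin n → ℝ} (hu : ∑ i, u i = 0) :
    lam2 L * (u ⬝ᵥ u) ≤ u ⬝ᵥ L *ᵥ u := by
  have hself (x : Fin n → ℝ) : x ⬝ᵥ x = ∑ i, x i ^ 2 := by simp only [dotProduct, sq]
  have hnorm (x : Fin n → ℝ) : x ⬝ᵥ x = ‖WithLp.toLp 2 x‖ ^ 2 := by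
    rw [hself, EuclideanSpace.real_norm_sq_eq]
  have hbdd : BddBelow {t : ℝ | ∃ x : Fin n → ℝ,
      (∑ i, x i = 0) ∧ (∑ i, (x i) ^ 2 = 1) ∧ t = x ⬝ᵥ (L *ᵥ x)} := by
    refine ⟨-opNorm L, ?_⟩
    rintro _ ⟨x, -, hx, rfl⟩
    have h := neg_le_of_abs_le (abs_dotProduct_mulVec_le_opNorm L x x)
    rwa [← sq, ← hnorm, hself, hx, mul_one] at h
  obtain rfl | hu0 := eq_or_ne u 0
  · simp
  have hpos : 0 < ‖WithLp.toLp 2 u‖ := norm_pos_iff.2 fun h => hu0 (congrArg WithLp.ofLp h)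
  set s := ‖WithLp.toLp 2 u‖
  have hle : lam2 L ≤ (s⁻¹ • u) ⬝ᵥ (L *ᵥ (s⁻¹ • u)) := by
    refine csInf_le hbdd ⟨s⁻¹ • u, ?_, ?_, rfl⟩
    · simp only [Pi.smul_apply, ← Finset.smul_sum, hu, smul_zero]
    · rw [← hself, smul_dotProduct, dotProduct_smul, hnorm, smul_eq_mul, smul_eq_mul]
      change s⁻¹ * (s⁻¹ * s ^ 2) = 1
      field_simp
  rw [mulVec_smul, smul_dotProduct, dotProduct_smul, smul_eq_mul, smul_eq_mul] at hle
  calc lam2 L * (u ⬝ᵥ u) = lam2 L * s ^ 2 := by rw [hnorm]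
    _ ≤ s⁻¹ * (s⁻¹ * (u ⬝ᵥ L *ᵥ u)) * s ^ 2 := by gcongr
    _ = u ⬝ᵥ L *ᵥ u := by field_simp

/-- The Dirichlet energy `tr (Yᵀ (L ⊗ I_r) Y)` of a block matrix, viewed as a function assigning
to each vertex `i` the matrix `Y_i`. -/
def dirichletEnergy (L : Matrix (Fin n) (Fin n) ℝ) (Y : Matrix (Fin n × Fin r) (Fin p) ℝ) : ℝ :=
  (Yᵀ * (L ⊗ₖ (1 : Matrix (Fin r) (Fin r) ℝ)) * Y).trace

lemma blk_kronecker_one_mul [NonAssocSemiring α] (L : Matrix (Fin n) (Fin n) α)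
    (Y : Matrix (Fin n × Fin r) (Fin p) α) (i : Fin n) :
    blk ((L ⊗ₖ (1 : Matrix (Fin r) (Fin r) α)) * Y) i = ∑ j, L i j • blk Y j := by
  ext a c
  simp [blk, Matrix.mul_apply, Matrix.sum_apply, kroneckerMap_apply, Fintype.sum_prod_type,
    Matrix.one_apply]

lemma lam2_mul_norm_sq_le_dirichletEnergy (L : Matrix (Fin n) (Fin n) ℝ)
    {X : Matrix (Fin n × Fin r) (Fin p) ℝ} (hX : ∑ i, blk X i = 0) :
    lam2 L * ‖X‖ ^ 2 ≤ dirichletEnergy L X := by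
  have henergy : dirichletEnergy L X =
      ∑ a, ∑ c, (fun i => X (i, a) c) ⬝ᵥ (L *ᵥ fun i => X (i, a) c) := by
    have hentry (i : Fin n) (a : Fin r) (c : Fin p) :
        ((L ⊗ₖ (1 : Matrix (Fin r) (Fin r) ℝ)) * X) (i, a) c = (L *ᵥ fun j => X (j, a) c) i := by
      have h := congrFun (congrFun (blk_kronecker_one_mul L X i) a) c
      rwa [Matrix.sum_apply] at h
    rw [dirichletEnergy, Matrix.mul_assoc, trace_mul_comm]
    simp only [Matrix.trace, Matrix.diag, Matrix.mul_apply (N := Xᵀ), transpose_apply,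
      Fintype.sum_prod_type_right, dotProduct, hentry]
    refine Finset.sum_congr rfl fun a _ => ?_
    rw [Finset.sum_comm]
    simp only [mul_comm]
  have hnorm : ‖X‖ ^ 2 = ∑ a, ∑ c, (fun i => X (i, a) c) ⬝ᵥ (fun i => X (i, a) c) := by
    simp only [frobenius_norm_sq, Fintype.sum_prod_type, dotProduct, ← sq]
    rw [Finset.sum_comm]
    exact Finset.sum_congr rfl fun a _ => Finset.sum_comm
  rw [henergy, hnorm, Finset.mul_sum]
  refine Finset.sum_le_sum fun a _ => ?_
  rw [Finset.mul_sum]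
  refine Finset.sum_le_sum fun c _ => lam2_mul_le L ?_
  simpa [blk, Matrix.sum_apply] using congrFun (congrFun hX a) c

/-- The Laplacian of an undirected graph with nonnegative edge weights `-L i j`. -/
structure IsLaplacian (L : Matrix (Fin n) (Fin n) ℝ) : Prop where
  isSymm : L.IsSymm
  sum_row : ∀ i, ∑ j, L i j = 0
  nonpos_of_ne : ∀ i j, i ≠ j → L i j ≤ 0

lemma isLaplacian_lapMatrix (G : SimpleGraph (Fin n)) [DecidableRel G.Adj] :
    IsLaplacian (G.lapMatrix ℝ) where
  isSymm := G.isSymm_lapMatrix ℝ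
  sum_row i := by
    simpa [mulVec, dotProduct] using congrFun (G.lapMatrix_mulVec_const_eq_zero (R := ℝ)) i
  nonpos_of_ne i j hij := by
    rw [SimpleGraph.lapMatrix, SimpleGraph.degMatrix, Matrix.sub_apply, diagonal_apply_ne _ hij,
      SimpleGraph.adjMatrix_apply]
    split_ifs <;> norm_num

variable {L : Matrix (Fin n) (Fin n) ℝ}

lemma IsLaplacian.trace_transpose_mul_kronecker_mul (hL : IsLaplacian L)
    (W Y : Matrix (Fin n × Fin r) (Fin p) ℝ) :
    (Wᵀ * (L ⊗ₖ (1 : Matrix (Fin r) (Fin r) ℝ)) * Y).trace =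
      ∑ i, ∑ j, -L i j * ((blk W i)ᵀ * (blk Y i - blk Y j)).trace := by
  have hblk (i : Fin n) : blk ((L ⊗ₖ (1 : Matrix (Fin r) (Fin r) ℝ)) * Y) i =
      ∑ j, -L i j • (blk Y i - blk Y j) := by
    simp only [blk_kronecker_one_mul, smul_sub, Finset.sum_sub_distrib, ← Finset.sum_smul,
      neg_smul, Finset.sum_neg_distrib, hL.sum_row, zero_smul, neg_zero, zero_sub, neg_neg]
  rw [Matrix.mul_assoc, transpose_mul_eq_sum_blk, trace_sum]
  simp only [hblk, Matrix.mul_sum, trace_sum, Matrix.mul_smul, trace_smul, smul_eq_mul]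

lemma IsLaplacian.dirichletEnergy_eq (hL : IsLaplacian L)
    (Y : Matrix (Fin n × Fin r) (Fin p) ℝ) :
    dirichletEnergy L Y = (∑ i, ∑ j, -L i j * ‖blk Y i - blk Y j‖ ^ 2) / 2 := by
  have hE : dirichletEnergy L Y = ∑ i, ∑ j, -L i j * ((blk Y i)ᵀ * (blk Y i - blk Y j)).trace :=
    hL.trace_transpose_mul_kronecker_mul Y Y
  have hE' : dirichletEnergy L Y =
      ∑ i, ∑ j, -L i j * ((blk Y j)ᵀ * (blk Y j - blk Y i)).trace := by
    rw [hE, Finset.sum_comm]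
    simp only [hL.isSymm.apply]
  rw [eq_div_iff two_ne_zero, mul_two]
  nth_rw 1 [hE]
  rw [hE', ← Finset.sum_add_distrib]
  refine Finset.sum_congr rfl fun i _ => ?_
  rw [← Finset.sum_add_distrib]
  refine Finset.sum_congr rfl fun j _ => ?_
  simp only [← trace_transpose_mul_self, transpose_sub, Matrix.sub_mul, Matrix.mul_sub, trace_sub]
  ring

lemma IsLaplacian.dirichletEnergy_sub_constStack (hL : IsLaplacian L)
    (Y : Matrix (Fin n × Fin r) (Fin p) ℝ) (A : Matrix (Fin r) (Fin p) ℝ) :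
    dirichletEnergy L (Y - constStack n A) = dirichletEnergy L Y := by
  have hblk (i : Fin n) : blk (Y - constStack n A) i = blk Y i - A := rfl
  simp only [hL.dirichletEnergy_eq, hblk, sub_sub_sub_cancel_right]

lemma IsLaplacian.dirichletEnergy_constStack (hL : IsLaplacian L)
    (A : Matrix (Fin r) (Fin p) ℝ) : dirichletEnergy L (constStack n A) = 0 := by
  simp [hL.dirichletEnergy_eq, blk_constStack]

lemma norm_sub_constStack_sq {X : Matrix (Fin n × Fin r) (Fin p) ℝ} (hX : ∑ i, blk X i = 0)
    (A : Matrix (Fin r) (Fin p) ℝ) : ‖X - constStack n A‖ ^ 2 = ‖X‖ ^ 2 + n * ‖A‖ ^ 2 := by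
  have horth : Xᵀ * constStack n A = 0 := by
    simp only [transpose_mul_eq_sum_blk, blk_constStack, ← Matrix.sum_mul, ← transpose_sum, hX,
      transpose_zero, Matrix.zero_mul]
  have hnorm : ‖constStack n A‖ ^ 2 = n * ‖A‖ ^ 2 := by
    simp [norm_sq_eq_sum_blk, blk_constStack]
  rw [norm_sub_sq_eq, horth, trace_zero, hnorm]
  ring

lemma sum_norm_sub_constStack_blk_sq {X : Matrix (Fin n × Fin r) (Fin p) ℝ}
    (hX : ∑ i, blk X i = 0) :
    ∑ j, ‖X - constStack n (blk X j)‖ ^ 2 = n * (2 * ‖X‖ ^ 2) := by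
  simp only [norm_sub_constStack_sq hX, Finset.sum_add_distrib, ← Finset.mul_sum,
    ← norm_sq_eq_sum_blk, Finset.sum_const, Finset.card_univ, Fintype.card_fin, nsmul_eq_mul]
  ring

lemma sum_blk_sub_mean [NeZero n] (Y : Matrix (Fin n × Fin r) (Fin p) ℝ) :
    ∑ i, blk (Y - constStack n ((n : ℝ)⁻¹ • ∑ i, blk Y i)) i = 0 := by
  have hblk (A : Matrix (Fin r) (Fin p) ℝ) (i : Fin n) :
      blk (Y - constStack n A) i = blk Y i - A := rfl
  simp [hblk, ← Nat.cast_smul_eq_nsmul ℝ, smul_smul]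

lemma IsLaplacian.exists_lam2_mul_norm_sub_sq_le [NeZero n] (hL : IsLaplacian L)
    (Y : Matrix (Fin n × Fin r) (Fin p) ℝ) :
    ∃ j, lam2 L * ‖Y - constStack n (blk Y j)‖ ^ 2 ≤ 2 * dirichletEnergy L Y := by
  set A := (n : ℝ)⁻¹ • ∑ i, blk Y i
  set X := Y - constStack n A with hXdef
  have hX : ∑ i, blk X i = 0 := sum_blk_sub_mean Y
  have hshift (j : Fin n) : Y - constStack n (blk Y j) = X - constStack n (blk X j) :=
    (sub_sub_sub_cancel_right Y (constStack n (blk Y j)) (constStack n A)).symm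
  have hsum : ∑ j : Fin n, lam2 L * ‖X - constStack n (blk X j)‖ ^ 2 ≤
      ∑ _j : Fin n, 2 * dirichletEnergy L Y := by
    rw [← Finset.mul_sum, sum_norm_sub_constStack_blk_sq hX, Finset.sum_const, Finset.card_univ,
      Fintype.card_fin, nsmul_eq_mul, ← hL.dirichletEnergy_sub_constStack Y A, ← hXdef]
    have := lam2_mul_norm_sq_le_dirichletEnergy L hX
    calc lam2 L * (n * (2 * ‖X‖ ^ 2)) = n * (2 * (lam2 L * ‖X‖ ^ 2)) := by ring
      _ ≤ n * (2 * dirichletEnergy L X) := by gcongr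
  obtain ⟨j, -, hj⟩ := Finset.exists_le_of_sum_le Finset.univ_nonempty hsum
  exact ⟨j, by rwa [hshift]⟩

end Laplacian

section Synchronization

variable {L : Matrix (Fin n) (Fin n) ℝ} {Δ : Matrix (Fin n × Fin r) (Fin n × Fin r) ℝ}

lemma trace_transpose_mul_kronecker_sub_mul (W Y : Matrix (Fin n × Fin r) (Fin p) ℝ) :
    (Wᵀ * (L ⊗ₖ (1 : Matrix (Fin r) (Fin r) ℝ) - Δ) * Y).trace =
      (Wᵀ * (L ⊗ₖ (1 : Matrix (Fin r) (Fin r) ℝ)) * Y).trace - (Wᵀ * Δ * Y).trace := by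
  rw [Matrix.mul_sub, Matrix.sub_mul, trace_sub]

lemma IsLaplacian.dirichletEnergy_le_of_isMinOn [NeZero n] (hL : IsLaplacian L) (hΔ : Δᵀ = Δ)
    (hsmall : 4 * √(r * n) * opNorm Δ ≤ lam2 L) {Y : Matrix (Fin n × Fin r) (Fin p) ℝ}
    (hY : Feasible Y)
    (hmin : IsMinOn (fun W : Matrix (Fin n × Fin r) (Fin p) ℝ =>
      ip (L ⊗ₖ (1 : Matrix (Fin r) (Fin r) ℝ) - Δ) (W * Wᵀ)) {W | Feasible W} Y) :
    dirichletEnergy L Y ≤ lam2 L / 2 := by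
  obtain ⟨j, hj⟩ := hL.exists_lam2_mul_norm_sub_sq_le Y
  set W := constStack n (blk Y j)
  have hW : Feasible W := feasible_constStack (hY j)
  have hle : dirichletEnergy L Y ≤ ((Y - W)ᵀ * Δ * (Y + W)).trace := by
    have hcross : (Wᵀ * Δ * Y).trace = (Yᵀ * Δ * W).trace := by
      rw [← trace_transpose]
      simp only [transpose_mul, transpose_transpose, hΔ, Matrix.mul_assoc]
    have hWY : ip (L ⊗ₖ (1 : Matrix (Fin r) (Fin r) ℝ) - Δ) (Y * Yᵀ) ≤
        ip (L ⊗ₖ (1 : Matrix (Fin r) (Fin r) ℝ) - Δ) (W * Wᵀ) := hmin hW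
    rw [ip_mul_transpose, ip_mul_transpose, trace_transpose_mul_kronecker_sub_mul,
      trace_transpose_mul_kronecker_sub_mul, ← dirichletEnergy, ← dirichletEnergy,
      hL.dirichletEnergy_constStack] at hWY
    simp only [transpose_sub, Matrix.sub_mul, Matrix.mul_add, trace_sub, trace_add, hcross]
    linarith
  have hadd : ‖Y + W‖ ≤ 2 * √(r * n) := by
    have := norm_add_le Y W
    rw [hY.norm_eq, hW.norm_eq] at this
    linarith
  have hnoise : ((Y - W)ᵀ * Δ * (Y + W)).trace ≤ lam2 L / 2 * ‖Y - W‖ :=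
    calc ((Y - W)ᵀ * Δ * (Y + W)).trace ≤ opNorm Δ * (‖Y - W‖ * ‖Y + W‖) :=
          (le_abs_self _).trans (abs_trace_transpose_mul_mul_le Δ _ _)
      _ ≤ opNorm Δ * (‖Y - W‖ * (2 * √(r * n))) := by
          gcongr
          exact opNorm_nonneg Δ
      _ = 4 * √(r * n) * opNorm Δ / 2 * ‖Y - W‖ := by ring
      _ ≤ lam2 L / 2 * ‖Y - W‖ := by gcongr
  have hlam : 0 ≤ lam2 L := (mul_nonneg (by positivity) (opNorm_nonneg Δ)).trans hsmall
  have hamgm : lam2 L * ‖Y - W‖ ≤ (lam2 L * ‖Y - W‖ ^ 2 + lam2 L) / 2 := by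
    nlinarith [mul_nonneg hlam (sq_nonneg (‖Y - W‖ - 1))]
  linarith

lemma trace_transpose_mul_Smat_mul (M : Matrix (Fin n × Fin r) (Fin n × Fin r) ℝ)
    (Y : Matrix (Fin n × Fin r) (Fin p) ℝ) (X : Matrix (Fin n × Fin r) (Fin k) ℝ) :
    (Xᵀ * Smat M Y * X).trace =
      (Xᵀ * M * X).trace - ((SBD (X * Xᵀ) * Y)ᵀ * M * Y).trace := by
  have hSBD : (Xᵀ * SBD (M * Y * Yᵀ) * X).trace = ((SBD (X * Xᵀ) * Y)ᵀ * M * Y).trace := by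
    rw [Matrix.mul_assoc, trace_mul_comm, Matrix.mul_assoc, trace_SBD_mul, Matrix.mul_assoc,
      trace_mul_comm, transpose_mul, SBD_transpose, Matrix.mul_assoc _ M Y]
  rw [Smat, Matrix.mul_sub, Matrix.sub_mul, trace_sub, hSBD]

lemma blk_SBD_mul_transpose_mul (X : Matrix (Fin n × Fin r) (Fin k) ℝ)
    (Y : Matrix (Fin n × Fin r) (Fin p) ℝ) (i : Fin n) :
    blk (SBD (X * Xᵀ) * Y) i = blk X i * (blk X i)ᵀ * blk Y i := by
  have hsymm (i : Fin n) : (diagBlk (X * Xᵀ) i)ᵀ = diagBlk (X * Xᵀ) i := by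
    rw [diagBlk_mul_transpose, transpose_mul, transpose_transpose]
  rw [SBD_eq_Dmat hsymm, blk_Dmat_mul, diagBlk_mul_transpose]

lemma norm_mul_eq_of_mul_transpose_eq_one {m l q : Type*} [Fintype m] [Fintype l] [Fintype q]
    [DecidableEq l] (A : Matrix m l ℝ) {P : Matrix l q ℝ} (hP : P * Pᵀ = 1) : ‖A * P‖ = ‖A‖ := by
  rw [← sq_eq_sq₀ (norm_nonneg _) (norm_nonneg _), ← trace_mul_transpose_self, transpose_mul,
    Matrix.mul_assoc, ← Matrix.mul_assoc P, hP, Matrix.one_mul, trace_mul_transpose_self]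

lemma norm_blk_sq_le (X : Matrix (Fin n × Fin r) (Fin p) ℝ) (i : Fin n) :
    ‖blk X i‖ ^ 2 ≤ ‖X‖ ^ 2 := by
  rw [norm_sq_eq_sum_blk X]
  exact Finset.single_le_sum (fun j _ => sq_nonneg ‖blk X j‖) (Finset.mem_univ i)

lemma Feasible.norm_SBD_mul_transpose_mul_le {Y : Matrix (Fin n × Fin r) (Fin p) ℝ}
    (hY : Feasible Y) (X : Matrix (Fin n × Fin r) (Fin k) ℝ) :
    ‖SBD (X * Xᵀ) * Y‖ ≤ ‖X‖ ^ 2 := by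
  have hblk (i : Fin n) : ‖blk (SBD (X * Xᵀ) * Y) i‖ ≤ ‖blk X i‖ ^ 2 := by
    rw [blk_SBD_mul_transpose_mul, norm_mul_eq_of_mul_transpose_eq_one _ (hY i), sq]
    exact (frobenius_norm_mul _ _).trans_eq (by rw [frobenius_norm_transpose])
  refine le_of_sq_le_sq ?_ (sq_nonneg _)
  calc ‖SBD (X * Xᵀ) * Y‖ ^ 2 = ∑ i, ‖blk (SBD (X * Xᵀ) * Y) i‖ ^ 2 := norm_sq_eq_sum_blk _
    _ ≤ ∑ i, ‖X‖ ^ 2 * ‖blk X i‖ ^ 2 := by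
        refine Finset.sum_le_sum fun i _ => ?_
        calc ‖blk (SBD (X * Xᵀ) * Y) i‖ ^ 2 ≤ (‖blk X i‖ ^ 2) ^ 2 := by
              gcongr
              exact hblk i
          _ ≤ ‖X‖ ^ 2 * ‖blk X i‖ ^ 2 := by
              rw [sq (‖blk X i‖ ^ 2)]
              gcongr ?_ * _
              exact norm_blk_sq_le X i
    _ = (‖X‖ ^ 2) ^ 2 := by rw [← Finset.mul_sum, ← norm_sq_eq_sum_blk, ← sq]

lemma trace_transpose_mul_sub_eq {l m q : Type*} [Fintype l] [Fintype m] [Fintype q]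
    [DecidableEq m] (X : Matrix m l ℝ) {P Q : Matrix m q ℝ} (hP : P * Pᵀ = 1) (hQ : Q * Qᵀ = 1) :
    ((X * Xᵀ * P)ᵀ * (P - Q)).trace = ‖Xᵀ * (P - Q)‖ ^ 2 / 2 := by
  have hassoc (R : Matrix m q ℝ) : ((X * Xᵀ * P)ᵀ * R).trace = ((Xᵀ * P)ᵀ * (Xᵀ * R)).trace := by
    simp only [transpose_mul, transpose_transpose, Matrix.mul_assoc]
  rw [hassoc, Matrix.mul_sub Xᵀ, Matrix.mul_sub, trace_sub, norm_sub_sq_eq,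
    trace_transpose_mul_self, norm_mul_eq_of_mul_transpose_eq_one _ hP,
    norm_mul_eq_of_mul_transpose_eq_one _ hQ]
  ring

lemma IsLaplacian.trace_SBD_mul_transpose_mul_le (hL : IsLaplacian L)
    {Y : Matrix (Fin n × Fin r) (Fin p) ℝ} (hY : Feasible Y)
    (X : Matrix (Fin n × Fin r) (Fin k) ℝ) :
    ((SBD (X * Xᵀ) * Y)ᵀ * (L ⊗ₖ (1 : Matrix (Fin r) (Fin r) ℝ)) * Y).trace ≤
      ‖X‖ ^ 2 * dirichletEnergy L Y := by
  have hpair (i j : Fin n) : ((blk X i * (blk X i)ᵀ * blk Y i)ᵀ * (blk Y i - blk Y j)).trace ≤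
      ‖X‖ ^ 2 * ‖blk Y i - blk Y j‖ ^ 2 / 2 := by
    rw [trace_transpose_mul_sub_eq _ (hY i) (hY j)]
    calc ‖(blk X i)ᵀ * (blk Y i - blk Y j)‖ ^ 2 / 2
        ≤ (‖blk X i‖ * ‖blk Y i - blk Y j‖) ^ 2 / 2 := by
          gcongr
          exact (frobenius_norm_mul _ _).trans_eq (by rw [frobenius_norm_transpose])
      _ ≤ ‖X‖ ^ 2 * ‖blk Y i - blk Y j‖ ^ 2 / 2 := by
          rw [mul_pow]
          gcongr ?_ * _ / 2
          exact norm_blk_sq_le X i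
  rw [hL.trace_transpose_mul_kronecker_mul, hL.dirichletEnergy_eq, mul_div_assoc', Finset.mul_sum,
    Finset.sum_div]
  refine Finset.sum_le_sum fun i _ => ?_
  rw [Finset.mul_sum, Finset.sum_div]
  refine Finset.sum_le_sum fun j _ => ?_
  obtain rfl | hij := eq_or_ne i j
  · simp
  · rw [blk_SBD_mul_transpose_mul, mul_left_comm, mul_div_assoc]
    exact mul_le_mul_of_nonneg_left (hpair i j) (neg_nonneg.2 (hL.nonpos_of_ne i j hij))

lemma IsLaplacian.trace_transpose_mul_Smat_mul_pos (hL : IsLaplacian L)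
    (hsmall : 4 * √(r * n) * opNorm Δ < lam2 L) {Y : Matrix (Fin n × Fin r) (Fin p) ℝ}
    (hY : Feasible Y) (hE : dirichletEnergy L Y ≤ lam2 L / 2)
    {X : Matrix (Fin n × Fin r) (Fin k) ℝ} (hX : ∑ i, blk X i = 0) (hX0 : X ≠ 0) :
    0 < (Xᵀ * Smat (L ⊗ₖ (1 : Matrix (Fin r) (Fin r) ℝ) - Δ) Y * X).trace := by
  set W := SBD (X * Xᵀ) * Y
  have hXL : lam2 L * ‖X‖ ^ 2 ≤ (Xᵀ * (L ⊗ₖ (1 : Matrix (Fin r) (Fin r) ℝ)) * X).trace :=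
    lam2_mul_norm_sq_le_dirichletEnergy L hX
  have hWL : (Wᵀ * (L ⊗ₖ (1 : Matrix (Fin r) (Fin r) ℝ)) * Y).trace ≤ ‖X‖ ^ 2 * (lam2 L / 2) :=
    (hL.trace_SBD_mul_transpose_mul_le hY X).trans (by gcongr)
  have hXΔ : (Xᵀ * Δ * X).trace ≤ opNorm Δ * ‖X‖ ^ 2 := by
    rw [sq]
    exact le_of_abs_le (abs_trace_transpose_mul_mul_le Δ X X)
  have hWΔ : -(opNorm Δ * (‖X‖ ^ 2 * √(r * n))) ≤ (Wᵀ * Δ * Y).trace := by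
    refine (neg_le_neg ?_).trans (neg_le_of_abs_le (abs_trace_transpose_mul_mul_le Δ W Y))
    rw [hY.norm_eq]
    gcongr
    · exact opNorm_nonneg Δ
    · exact hY.norm_SBD_mul_transpose_mul_le X
  have hN : 1 ≤ √(r * n : ℝ) := by
    obtain ⟨⟨i, a⟩, -⟩ := Function.ne_iff.1 hX0
    rw [Real.one_le_sqrt]
    exact_mod_cast Nat.mul_pos a.pos i.pos
  have hmargin : 0 < lam2 L / 2 - opNorm Δ * (1 + √(r * n)) := by
    nlinarith [mul_nonneg (opNorm_nonneg Δ) (sub_nonneg.2 hN)]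
  have hX2 : 0 < ‖X‖ ^ 2 := by positivity
  rw [trace_transpose_mul_Smat_mul, trace_transpose_mul_kronecker_sub_mul,
    trace_transpose_mul_kronecker_sub_mul]
  nlinarith [mul_pos hmargin hX2]

end Synchronization

section Certificate

variable {M S : Matrix (Fin n × Fin r) (Fin n × Fin r) ℝ}

/-- `X` is the unique minimizer of the semidefinite relaxation with cost matrix `M`, expressed as a
strict inequality against every other feasible point. -/
def IsStrictSDPOptimum (M X : Matrix (Fin n × Fin r) (Fin n × Fin r) ℝ) : Prop :=
  SDPFeasible X ∧ ∀ X', SDPFeasible X' → X' ≠ X → ip M X < ip M X'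

lemma IsStrictSDPOptimum.ip_le {X X' : Matrix (Fin n × Fin r) (Fin n × Fin r) ℝ}
    (hX : IsStrictSDPOptimum M X) (hX' : SDPFeasible X') : ip M X ≤ ip M X' := by
  obtain rfl | hne := eq_or_ne X' X
  · exact le_rfl
  · exact (hX.2 X' hX' hne).le

lemma IsStrictSDPOptimum.eq_of_ip_le {X X' : Matrix (Fin n × Fin r) (Fin n × Fin r) ℝ}
    (hX : IsStrictSDPOptimum M X) (hX' : SDPFeasible X') (hle : ip M X' ≤ ip M X) : X' = X :=
  of_not_not fun hne => (hX.2 X' hX' hne).not_ge hle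

open scoped MatrixOrder Matrix.Norms.L2Operator in
lemma exists_eq_mul_transpose_of_posSemidef {m : Type*} [Fintype m] {X : Matrix m m ℝ}
    (hX : X.PosSemidef) : ∃ B : Matrix m (Fin (Fintype.card m)) ℝ, X = B * Bᵀ := by
  classical
  obtain ⟨A, hA⟩ := CStarAlgebra.nonneg_iff_eq_star_mul_self.1 hX.nonneg
  refine ⟨Aᵀ.submatrix id (Fintype.equivFin m).symm, ?_⟩
  rw [transpose_submatrix, submatrix_mul_equiv, transpose_transpose, submatrix_id_id, hA,
    star_eq_conjTranspose, conjTranspose_eq_transpose_of_trivial]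

lemma SDPFeasible.ip_eq {X : Matrix (Fin n × Fin r) (Fin n × Fin r) ℝ} (hX : SDPFeasible X)
    (M : Matrix (Fin n × Fin r) (Fin n × Fin r) ℝ) (Y : Matrix (Fin n × Fin r) (Fin p) ℝ) :
    ip M X = (Smat M Y * X).trace + (M * Y * Yᵀ).trace := by
  rw [ip, hX.transpose_eq, Smat, Matrix.sub_mul, trace_sub, trace_SBD_mul, hX.2, Matrix.mul_one,
    sub_add_cancel]

lemma transpose_Smat (hM : Mᵀ = M) (Y : Matrix (Fin n × Fin r) (Fin p) ℝ) :
    (Smat M Y)ᵀ = Smat M Y := by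
  rw [Smat, transpose_sub, hM, SBD_transpose]

lemma Feasible.isUnit_sum_blk [NeZero n] {Y : Matrix (Fin n × Fin r) (Fin r) ℝ} (hY : Feasible Y)
    (hSY : S * Y = 0)
    (hS : ∀ X : Matrix (Fin n × Fin r) (Fin 1) ℝ,
      ∑ i, blk X i = 0 → X ≠ 0 → 0 < (Xᵀ * S * X).trace) :
    IsUnit (∑ i, blk Y i) := by
  rw [isUnit_iff_isUnit_det, isUnit_iff_ne_zero]
  intro hdet
  obtain ⟨v, hv, hv0⟩ := exists_mulVec_eq_zero_iff.2 hdet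
  set V : Matrix (Fin r) (Fin 1) ℝ := replicateCol (Fin 1) v with hV
  have hsum : ∑ i, blk (Y * V) i = 0 := by
    simp only [blk_mul, ← Matrix.sum_mul]
    rw [hV, ← replicateCol_mulVec, hv0, replicateCol_zero]
  have hYV : Y * V ≠ 0 := fun h0 => hv <| by
    have hblk : blk Y 0 * V = 0 := congrArg (blk · 0) h0
    have hV0 : V = 0 := by
      rw [← Matrix.one_mul V, ← hY.transpose_blk_mul_blk 0, Matrix.mul_assoc, hblk, Matrix.mul_zero]
    exact (replicateCol_eq_zero v).1 hV0
  have hpos := hS (Y * V) hsum hYV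
  rw [Matrix.mul_assoc, ← Matrix.mul_assoc S, hSY, Matrix.zero_mul, Matrix.mul_zero,
    trace_zero] at hpos
  exact hpos.false

lemma exists_sum_blk_sub_mul_eq_zero {Y : Matrix (Fin n × Fin r) (Fin r) ℝ}
    (hY : IsUnit (∑ i, blk Y i)) (B : Matrix (Fin n × Fin r) (Fin k) ℝ) :
    ∃ C : Matrix (Fin r) (Fin k) ℝ, ∑ i, blk (B - Y * C) i = 0 := by
  obtain ⟨T, hT⟩ := hY.exists_right_inv
  refine ⟨T * ∑ i, blk B i, ?_⟩
  calc ∑ i, blk (B - Y * (T * ∑ i, blk B i)) i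
      = ∑ i, (blk B i - blk Y i * (T * ∑ i, blk B i)) := rfl
    _ = 0 := by
        rw [Finset.sum_sub_distrib, ← Matrix.sum_mul, ← Matrix.mul_assoc, hT, Matrix.one_mul,
          sub_self]

lemma transpose_mul_mul_eq_of_mul_eq_zero {m l q R : Type*} [Fintype m] [Fintype l] [CommRing R]
    {S : Matrix m m R} (hS : Sᵀ = S) {Y : Matrix m l R} (hSY : S * Y = 0) (B : Matrix m q R)
    (C : Matrix l q R) :
    (B - Y * C)ᵀ * S * (B - Y * C) = Bᵀ * S * B := by
  have hYS : Yᵀ * S = 0 := by rw [← transpose_eq_zero, transpose_mul, transpose_transpose, hS, hSY]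
  rw [transpose_sub, transpose_mul, Matrix.sub_mul, Matrix.mul_assoc Cᵀ, hYS, Matrix.mul_zero,
    sub_zero, Matrix.mul_sub, Matrix.mul_assoc _ S (Y * C), ← Matrix.mul_assoc S, hSY,
    Matrix.zero_mul, Matrix.mul_zero, sub_zero]

lemma Feasible.eq_mul_transpose_of_sdpFeasible [NeZero n] {Y : Matrix (Fin n × Fin r) (Fin r) ℝ}
    (hY : Feasible Y) {C : Matrix (Fin r) (Fin k) ℝ} (hYC : SDPFeasible (Y * C * (Y * C)ᵀ)) :
    Y * C * (Y * C)ᵀ = Y * Yᵀ := by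
  have hblk : blk Y 0 * C * (blk Y 0 * C)ᵀ = 1 := hYC.diagBlk_eq_one 0
  have hC : C * Cᵀ = 1 := by
    calc C * Cᵀ = (blk Y 0)ᵀ * blk Y 0 * C * ((blk Y 0)ᵀ * blk Y 0 * C)ᵀ := by
          rw [hY.transpose_blk_mul_blk, Matrix.one_mul]
      _ = (blk Y 0)ᵀ * (blk Y 0 * C * (blk Y 0 * C)ᵀ) * blk Y 0 := by
          simp only [transpose_mul, transpose_transpose, Matrix.mul_assoc]
      _ = 1 := by rw [hblk, Matrix.mul_one, hY.transpose_blk_mul_blk]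
  rw [transpose_mul, Matrix.mul_assoc, ← Matrix.mul_assoc C, hC, Matrix.one_mul]

lemma Feasible.isStrictSDPOptimum_mul_transpose [NeZero n] (hM : Mᵀ = M)
    {Y : Matrix (Fin n × Fin r) (Fin r) ℝ} (hY : Feasible Y) (hSY : Smat M Y * Y = 0)
    (hS : ∀ {k : ℕ} (X : Matrix (Fin n × Fin r) (Fin k) ℝ),
      ∑ i, blk X i = 0 → X ≠ 0 → 0 < (Xᵀ * Smat M Y * X).trace) :
    IsStrictSDPOptimum M (Y * Yᵀ) := by
  refine ⟨hY.sdpFeasible_mul_transpose, fun X hX hXne => ?_⟩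
  obtain ⟨B, rfl⟩ := exists_eq_mul_transpose_of_posSemidef hX.1
  obtain ⟨C, hC⟩ := exists_sum_blk_sub_mul_eq_zero (hY.isUnit_sum_blk hSY hS) B
  have hBC : B - Y * C ≠ 0 := fun h0 => hXne <| by
    obtain rfl := sub_eq_zero.1 h0
    exact hY.eq_mul_transpose_of_sdpFeasible hX
  have hpos := hS (B - Y * C) hC hBC
  rw [transpose_mul_mul_eq_of_mul_eq_zero (transpose_Smat hM Y) hSY, trace_mul_comm,
    ← Matrix.mul_assoc, trace_mul_comm] at hpos
  rw [hY.sdpFeasible_mul_transpose.ip_eq M Y, hX.ip_eq M Y, ← Matrix.mul_assoc, hSY,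
    Matrix.zero_mul, trace_zero]
  exact add_lt_add_left hpos _

end Certificate

section GaugeFixing

variable {Z : Fin n → Matrix (Fin r) (Fin r) ℝ}
  {M X Δ : Matrix (Fin n × Fin r) (Fin n × Fin r) ℝ} {L : Matrix (Fin n) (Fin n) ℝ}

lemma pos_of_lam2_pos (hL : 0 < lam2 L) : 0 < n := by
  refine Nat.pos_of_ne_zero ?_
  rintro rfl
  simp [lam2] at hL

lemma IsLaplacian.exists_isStrictSDPOptimum (hL : IsLaplacian L) (hΔ : Δᵀ = Δ)
    (hsmall : 4 * √(r * n) * opNorm Δ < lam2 L) :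
    ∃ Y : Matrix (Fin n × Fin r) (Fin r) ℝ, Feasible Y ∧
      IsStrictSDPOptimum (L ⊗ₖ (1 : Matrix (Fin r) (Fin r) ℝ) - Δ) (Y * Yᵀ) := by
  have hlam : 0 < lam2 L :=
    (mul_nonneg (by positivity) (opNorm_nonneg Δ)).trans_lt hsmall
  have : NeZero n := ⟨(pos_of_lam2_pos hlam).ne'⟩
  have hM : (L ⊗ₖ (1 : Matrix (Fin r) (Fin r) ℝ) - Δ)ᵀ = L ⊗ₖ 1 - Δ := by
    rw [transpose_sub, ← kroneckerMap_transpose, hL.isSymm, transpose_one, hΔ]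
  obtain ⟨Y, hY, hmin⟩ := exists_feasible_isMinOn (L ⊗ₖ (1 : Matrix (Fin r) (Fin r) ℝ) - Δ)
  have hE := hL.dirichletEnergy_le_of_isMinOn hΔ hsmall.le hY hmin
  exact ⟨Y, hY, hY.isStrictSDPOptimum_mul_transpose hM (Smat_mul_eq_zero_of_isMinOn hM hY hmin)
    fun X hX hX0 => hL.trace_transpose_mul_Smat_mul_pos hsmall hY hE hX hX0⟩

lemma transpose_Dmat (Z : Fin n → Matrix (Fin r) (Fin r) ℝ) :
    (Dmat Z)ᵀ = Dmat fun i => (Z i)ᵀ := by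
  ext ⟨i, a⟩ ⟨j, b⟩
  by_cases h : i = j
  · subst h
    simp [Dmat]
  · simp [Dmat, h, Ne.symm h]

lemma ip_conj {m : Type*} [Fintype m] (D M X : Matrix m m ℝ) :
    ip (D * M * Dᵀ) X = ip M (Dᵀ * X * D) := by
  simp only [ip, transpose_mul, transpose_transpose]
  rw [Matrix.mul_assoc, Matrix.mul_assoc, trace_mul_comm]
  simp only [Matrix.mul_assoc]

lemma SDPFeasible.Dmat_conj (hZ : ∀ i, Z i * (Z i)ᵀ = 1) (hX : SDPFeasible X) :
    SDPFeasible (Dmat Z * X * (Dmat Z)ᵀ) := by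
  have hpsd := hX.1.mul_mul_conjTranspose_same (Dmat Z)
  rw [conjTranspose_eq_transpose_of_trivial] at hpsd
  have hsymm : (Dmat Z * X * (Dmat Z)ᵀ)ᵀ = Dmat Z * X * (Dmat Z)ᵀ := by
    rw [transpose_mul, transpose_mul, transpose_transpose, hX.transpose_eq, Matrix.mul_assoc]
  refine ⟨hpsd, (SBD_eq_one_iff hsymm).2 fun i => ?_⟩
  rw [diagBlk_Dmat_conj, hX.diagBlk_eq_one, Matrix.mul_one, hZ i]

lemma IsStrictSDPOptimum.Dmat_conj (hZ : ∀ i, Z i * (Z i)ᵀ = 1) (hX : IsStrictSDPOptimum M X) :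
    IsStrictSDPOptimum (Dmat Z * M * (Dmat Z)ᵀ) (Dmat Z * X * (Dmat Z)ᵀ) := by
  have hD : Dmat Z * (Dmat Z)ᵀ = 1 := Dmat_mul_transpose hZ
  have hD' : (Dmat Z)ᵀ * Dmat Z = 1 := mul_eq_one_comm.1 hD
  refine ⟨hX.1.Dmat_conj hZ, fun X' hX' hne => ?_⟩
  have hback : SDPFeasible ((Dmat Z)ᵀ * X' * Dmat Z) := by
    have hZt (i : Fin n) : (Z i)ᵀ * (Z i)ᵀᵀ = 1 := by
      rw [transpose_transpose, mul_eq_one_comm.1 (hZ i)]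
    simpa only [← transpose_Dmat, transpose_transpose] using hX'.Dmat_conj hZt
  have hcancel : (Dmat Z)ᵀ * (Dmat Z * X * (Dmat Z)ᵀ) * Dmat Z = X := by
    rw [Matrix.mul_assoc _ _ (Dmat Z), Matrix.mul_assoc _ _ (Dmat Z), hD', Matrix.mul_one,
      ← Matrix.mul_assoc, hD', Matrix.one_mul]
  rw [ip_conj, ip_conj, hcancel]
  refine hX.2 _ hback fun h => hne ?_
  rw [← h, Matrix.mul_assoc (Dmat Z)ᵀ, ← Matrix.mul_assoc (Dmat Z) (Dmat Z)ᵀ, hD, Matrix.one_mul,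
    Matrix.mul_assoc X', hD, Matrix.mul_one]

lemma LZmat_sub_eq_Dmat_conj (hZ : ∀ i, Z i * (Z i)ᵀ = 1) (L : Matrix (Fin n) (Fin n) ℝ)
    (Δ : Matrix (Fin n × Fin r) (Fin n × Fin r) ℝ) :
    LZmat L Z - Δ = Dmat Z * (L ⊗ₖ 1 - (Dmat Z)ᵀ * Δ * Dmat Z) * (Dmat Z)ᵀ := by
  have hD : Dmat Z * (Dmat Z)ᵀ = 1 := Dmat_mul_transpose hZ
  have hcancel : Dmat Z * ((Dmat Z)ᵀ * Δ * Dmat Z) * (Dmat Z)ᵀ = Δ := by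
    rw [Matrix.mul_assoc, Matrix.mul_assoc _ (Dmat Z), hD, Matrix.mul_one, ← Matrix.mul_assoc, hD,
      Matrix.one_mul]
  rw [LZmat, Matrix.mul_sub, Matrix.sub_mul, hcancel]

lemma IsLaplacian.exists_isStrictSDPOptimum_LZmat (hL : IsLaplacian L)
    (hZ : ∀ i, Z i * (Z i)ᵀ = 1) (hΔ : Δᵀ = Δ) (hsmall : 4 * √(r * n) * opNorm Δ < lam2 L) :
    ∃ Y : Matrix (Fin n × Fin r) (Fin r) ℝ, Feasible Y ∧
      IsStrictSDPOptimum (LZmat L Z - Δ) (Y * Yᵀ) := by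
  have hΔ' : ((Dmat Z)ᵀ * Δ * Dmat Z)ᵀ = (Dmat Z)ᵀ * Δ * Dmat Z := by
    rw [transpose_mul, transpose_mul, transpose_transpose, hΔ, Matrix.mul_assoc]
  obtain ⟨Y, hY, hopt⟩ := hL.exists_isStrictSDPOptimum hΔ'
    (by rwa [opNorm_orthogonal_conj (Dmat_mul_transpose hZ)])
  refine ⟨Dmat Z * Y, hY.Dmat_mul hZ, ?_⟩
  have hconj := hopt.Dmat_conj hZ
  rwa [← LZmat_sub_eq_Dmat_conj hZ, ← Matrix.mul_assoc, Matrix.mul_assoc, ← transpose_mul] at hconj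

end GaugeFixing

lemma four_mul_mul_lt_of_lt_div {d l s : ℝ} (hd : 0 ≤ d) (hs : 0 ≤ s)
    (h : d < l / (2 * √5 * s)) : 4 * s * d < l := by
  obtain rfl | hs' := hs.eq_or_lt
  · rw [mul_zero, div_zero] at h
    exact absurd h hd.not_gt
  have h5 : 2 ≤ √5 := Real.le_sqrt_of_sq_le (by norm_num)
  rw [lt_div_iff₀ (by positivity)] at h
  nlinarith [mul_nonneg hd hs]

theorem sdp_exactness_general
    {n r : ℕ} {L : Matrix (Fin n) (Fin n) ℝ} (hL : IsLaplacian L)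
    {Zb : Fin n → Matrix (Fin r) (Fin r) ℝ} (hZb : ∀ i, Zb i * (Zb i)ᵀ = 1)
    {Δ : Matrix (Fin n × Fin r) (Fin n × Fin r) ℝ} (hΔsym : Δᵀ = Δ)
    {Lhat : Matrix (Fin n × Fin r) (Fin n × Fin r) ℝ} (hLhat : Lhat = LZmat L Zb - Δ)
    (hΔsmall : 4 * √(r * n) * opNorm Δ < lam2 L) :
    ∃ (Xhat : Matrix (Fin n × Fin r) (Fin n × Fin r) ℝ)
      (Zhat : Matrix (Fin n × Fin r) (Fin r) ℝ),
      SDPFeasible Xhat ∧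
      (∀ X : Matrix (Fin n × Fin r) (Fin n × Fin r) ℝ, SDPFeasible X →
        ip Lhat Xhat ≤ ip Lhat X) ∧
      (∀ X : Matrix (Fin n × Fin r) (Fin n × Fin r) ℝ, SDPFeasible X →
        (∀ X' : Matrix (Fin n × Fin r) (Fin n × Fin r) ℝ, SDPFeasible X' →
          ip Lhat X ≤ ip Lhat X') → X = Xhat) ∧
      Xhat.rank = r ∧
      Feasible Zhat ∧
      (∀ W : Matrix (Fin n × Fin r) (Fin r) ℝ, Feasible W →
        ip Lhat (Zhat * Zhatᵀ) ≤ ip Lhat (W * Wᵀ)) ∧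
      (∀ W : Matrix (Fin n × Fin r) (Fin r) ℝ, Feasible W →
        (∀ W' : Matrix (Fin n × Fin r) (Fin r) ℝ, Feasible W' →
          ip Lhat (W * Wᵀ) ≤ ip Lhat (W' * W'ᵀ)) →
        ∃ Q : Matrix (Fin r) (Fin r) ℝ, Q * Qᵀ = 1 ∧ W = Zhat * Q) ∧
      Xhat = Zhat * Zhatᵀ := by
  subst hLhat
  have : NeZero n := ⟨(pos_of_lam2_pos <|
    (mul_nonneg (by positivity) (opNorm_nonneg Δ)).trans_lt hΔsmall).ne'⟩
  obtain ⟨Y, hY, hopt⟩ := hL.exists_isStrictSDPOptimum_LZmat hZb hΔsym hΔsmall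
  refine ⟨Y * Yᵀ, Y, hopt.1, fun X hX => hopt.ip_le hX,
    fun X hX hXmin => hopt.eq_of_ip_le hX (hXmin _ hopt.1), hY.rank_mul_transpose, hY,
    fun W hW => hopt.ip_le hW.sdpFeasible_mul_transpose, fun W hW hWmin => ?_, rfl⟩
  exact hW.exists_eq_mul_of_mul_transpose_eq hY
    (hopt.eq_of_ip_le hW.sdpFeasible_mul_transpose (hWmin Y hY))

/-- **Corollary 1.7 (SDP exactness).**  Suppose `G` is connected and
`‖Δ‖ < λ₂/(2√5 √(rn))`.  Then the SDP relaxation has a unique optimal solution `X̂` of rank `r`;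
the unrelaxed problem has a solution `Ẑ`, unique up to right-multiplication by an element of
`O(r)`; and `X̂ = Ẑ Ẑᵀ`. -/
theorem sdp_exactness
    (n r : ℕ) (hn : 1 ≤ n) (hr : 1 ≤ r)
    (G : SimpleGraph (Fin n)) [DecidableRel G.Adj] (hG : G.Connected)
    (Zb : Fin n → Matrix (Fin r) (Fin r) ℝ) (hZb : ∀ i, Zb i * (Zb i)ᵀ = 1)
    (Δ : Matrix (Fin n × Fin r) (Fin n × Fin r) ℝ) (hΔsym : Δᵀ = Δ)
    (hΔsupp : ∀ q q' : Fin n × Fin r, ¬ G.Adj q.1 q'.1 → Δ q q' = 0)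
    (Lhat : Matrix (Fin n × Fin r) (Fin n × Fin r) ℝ)
    (hLhat : Lhat = LZmat (G.lapMatrix ℝ) Zb - Δ)
    (hΔsmall : opNorm Δ < lam2 (G.lapMatrix ℝ) / (2 * Real.sqrt 5 * Real.sqrt (r * n))) :
    ∃ (Xhat : Matrix (Fin n × Fin r) (Fin n × Fin r) ℝ)
      (Zhat : Matrix (Fin n × Fin r) (Fin r) ℝ),
      -- (i) `X̂` is the unique optimal solution of the SDP relaxation, of rank `r`
      SDPFeasible Xhat ∧
      (∀ X : Matrix (Fin n × Fin r) (Fin n × Fin r) ℝ, SDPFeasible X →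
        ip Lhat Xhat ≤ ip Lhat X) ∧
      (∀ X : Matrix (Fin n × Fin r) (Fin n × Fin r) ℝ, SDPFeasible X →
        (∀ X' : Matrix (Fin n × Fin r) (Fin n × Fin r) ℝ, SDPFeasible X' →
          ip Lhat X ≤ ip Lhat X') → X = Xhat) ∧
      Xhat.rank = r ∧
      -- (ii) `Ẑ` solves the unrelaxed problem, uniquely up to right `O(r)`-multiplication
      Feasible Zhat ∧
      (∀ W : Matrix (Fin n × Fin r) (Fin r) ℝ, Feasible W →
        ip Lhat (Zhat * Zhatᵀ) ≤ ip Lhat (W * Wᵀ)) ∧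
      (∀ W : Matrix (Fin n × Fin r) (Fin r) ℝ, Feasible W →
        (∀ W' : Matrix (Fin n × Fin r) (Fin r) ℝ, Feasible W' →
          ip Lhat (W * Wᵀ) ≤ ip Lhat (W' * W'ᵀ)) →
        ∃ Q : Matrix (Fin r) (Fin r) ℝ, Q * Qᵀ = 1 ∧ W = Zhat * Q) ∧
      -- (iii)
      Xhat = Zhat * Zhatᵀ :=
  sdp_exactness_general (isLaplacian_lapMatrix G) hZb hΔsym hLhat
    (four_mul_mul_lt_of_lt_div (opNorm_nonneg Δ) (Real.sqrt_nonneg _) hΔsmall)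

end SyncPaper
end

section
/- Suppose G is connected. Then every optimal solution X of the SDP relaxation min{⟨L̂, X⟩ : X positive semidefinite, SBD(X) = I_{rn}} satisfies tr(X (Z Zᵀ)ᵀ) ≥ (1 − 4‖Δ‖²/λ₂²) · n² r. -/
open Matrix MeasureTheory ProbabilityTheory
open scoped Kronecker BigOperators

namespace SyncPaper

/-!
Every feasible `X` satisfies `0 ≤ X ≤ n • 1` and `tr X = n r`. Two matrices `0 ≤ A, B ≤ 1` satisfy
`A - B = (1 - B) A - B (1 - A)`, so Cauchy–Schwarz with the weights `A` and `B` bounds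
`tr (Δ (A - B))` by `‖Δ‖` times the square roots of `tr A · tr (A (1 - B))` and
`tr B · tr (B (1 - A))`. For `A = X / n` and `B = Z Zᵀ / n` this says
`tr (Δ (X - Z Zᵀ)) ≤ 2 ‖Δ‖ √(r d)` with the defect `d = n² r - tr (X Z Zᵀ)`.

Conversely, conjugating `λ₂ (I - J / n) ≤ L`, with `J` the all-ones matrix, gives
`λ₂ (I - Z Zᵀ / n) ≤ L_Z`, hence `λ₂ d ≤ n tr (L_Z X)`. Since `L_Z Z = 0`, optimality of `X` against
`Z Zᵀ` reads `tr (L_Z X) ≤ tr (Δ (X - Z Zᵀ))`, so `λ₂ d ≤ 2 n ‖Δ‖ √(r d)`; solving for `d` gives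
the bound.
-/

section LoewnerOrder

open scoped MatrixOrder

variable {ι κ : Type*} [Fintype ι]

lemma trace_mul_nonneg {A B : Matrix ι ι ℝ} (hA : 0 ≤ A) (hB : 0 ≤ B) : 0 ≤ (A * B).trace := by
  classical
  obtain ⟨C, rfl⟩ := CStarAlgebra.nonneg_iff_eq_star_mul_self.mp hB
  rw [← Matrix.mul_assoc, trace_mul_comm, ← Matrix.mul_assoc]
  exact (hA.posSemidef.mul_mul_conjTranspose_same C).trace_nonneg

lemma trace_mul_le_trace_mul {A B S : Matrix ι ι ℝ} (hAB : A ≤ B) (hS : 0 ≤ S) :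
    (A * S).trace ≤ (B * S).trace := by
  rw [← sub_nonneg, ← trace_sub, ← sub_mul]
  exact trace_mul_nonneg (sub_nonneg.mpr hAB) hS

lemma le_of_forall_dotProduct_mulVec_le {A B : Matrix ι ι ℝ} (hA : A.IsHermitian)
    (hB : B.IsHermitian) (h : ∀ x, x ⬝ᵥ (A *ᵥ x) ≤ x ⬝ᵥ (B *ᵥ x)) : A ≤ B :=
  Matrix.le_iff.mpr <| .of_dotProduct_mulVec_nonneg (hB.sub hA) fun x => by
    simpa only [star_trivial, sub_mulVec, dotProduct_sub, sub_nonneg] using h x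

lemma dotProduct_transpose_mul_self_mulVec [Fintype κ] (C : Matrix κ ι ℝ) (x : ι → ℝ) :
    x ⬝ᵥ ((Cᵀ * C) *ᵥ x) = ∑ k, (C *ᵥ x) k ^ 2 := by
  rw [← mulVec_mulVec, dotProduct_mulVec, vecMul_transpose]
  simp only [dotProduct, sq]

lemma dotProduct_mulVec_sub_smul_one {M : Matrix ι ι ℝ} (hM : M.IsHermitian)
    (hM₁ : M *ᵥ 1 = 0) (x : ι → ℝ) (c : ℝ) :
    (x - c • 1) ⬝ᵥ (M *ᵥ (x - c • 1)) = x ⬝ᵥ (M *ᵥ x) := by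
  have hone : (1 : ι → ℝ) ⬝ᵥ (M *ᵥ x) = 0 := by
    rw [dotProduct_mulVec, ← mulVec_transpose, ← conjTranspose_eq_transpose_of_trivial, hM.eq,
      hM₁, zero_dotProduct]
  rw [mulVec_sub, mulVec_smul, hM₁, smul_zero, sub_zero, sub_dotProduct, smul_dotProduct, hone,
    smul_zero, sub_zero]

lemma dotProduct_mulVec_sum_le {A : Matrix ι ι ℝ} (hA : 0 ≤ A) (s : Finset κ) (v : κ → ι → ℝ) :
    (∑ k ∈ s, v k) ⬝ᵥ (A *ᵥ ∑ k ∈ s, v k) ≤ s.card * ∑ k ∈ s, v k ⬝ᵥ (A *ᵥ v k) := by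
  classical
  obtain ⟨C, rfl⟩ := CStarAlgebra.nonneg_iff_eq_star_mul_self.mp hA
  rw [star_eq_conjTranspose, conjTranspose_eq_transpose_of_trivial,
    dotProduct_transpose_mul_self_mulVec, mulVec_sum]
  simp only [dotProduct_transpose_mul_self_mulVec, Finset.sum_apply]
  rw [Finset.sum_comm, Finset.mul_sum]
  exact Finset.sum_le_sum fun i _ => sq_sum_le_card_mul_sum_sq

lemma sq_trace_mul_mul_transpose_le {S : Matrix ι ι ℝ} (hS : 0 ≤ S) (C D : Matrix ι ι ℝ) :
    (C * S * Dᵀ).trace ^ 2 ≤ (C * S * Cᵀ).trace * (D * S * Dᵀ).trace := by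
  let := S.toMatrixSeminormedAddCommGroup hS.posSemidef
  let := S.toMatrixInnerProductSpace hS.posSemidef
  rw [mul_comm, sq]
  exact real_inner_mul_inner_self_le D C

variable [DecidableEq ι]

lemma transpose_mul_self_le_opNorm_sq [Fintype κ] (D : Matrix κ ι ℝ) :
    Dᵀ * D ≤ opNorm D ^ 2 • 1 := by
  refine le_of_forall_dotProduct_mulVec_le (by simpa using isHermitian_conjTranspose_mul_self D)
    (by simp [IsHermitian]) fun x => ?_
  have hDx : ‖(WithLp.toLp 2 (D *ᵥ x) : EuclideanSpace ℝ κ)‖ ≤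
      opNorm D * ‖(WithLp.toLp 2 x : EuclideanSpace ℝ ι)‖ :=
    D.l2_opNorm_mulVec (WithLp.toLp 2 x)
  have hsq := pow_le_pow_left₀ (norm_nonneg _) hDx 2
  rw [mul_pow, EuclideanSpace.real_norm_sq_eq, EuclideanSpace.real_norm_sq_eq] at hsq
  rw [dotProduct_transpose_mul_self_mulVec, smul_mulVec, one_mulVec, dotProduct_smul, smul_eq_mul]
  simpa only [dotProduct, ← sq] using hsq

lemma opNorm_transpose [Fintype κ] [DecidableEq κ] (D : Matrix ι κ ℝ) : opNorm Dᵀ = opNorm D :=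
  D.l2_opNorm_conjTranspose

lemma mul_self_le_self {T : Matrix ι ι ℝ} (hT₀ : 0 ≤ T) (hT₁ : T ≤ 1) : T * T ≤ T := by
  have h : 0 ≤ T * (1 - T) :=
    Commute.mul_nonneg hT₀ (sub_nonneg.mpr hT₁) ((Commute.one_right T).sub_right (.refl T))
  rwa [mul_sub, mul_one, sub_nonneg] at h

lemma abs_trace_mul_mul_le {S T : Matrix ι ι ℝ} (hS : 0 ≤ S) (hT₀ : 0 ≤ T) (hT₁ : T ≤ 1)
    (D : Matrix ι ι ℝ) :
    |(D * S * T).trace| ≤ opNorm D * √(S.trace * (S * T).trace) := by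
  have hT : Tᵀ = T := hT₀.posSemidef.isHermitian
  have hDS : (D * S * Dᵀ).trace ≤ opNorm D ^ 2 * S.trace := by
    have := trace_mul_le_trace_mul (transpose_mul_self_le_opNorm_sq D) hS
    rwa [smul_mul_assoc, one_mul, trace_smul, smul_eq_mul, Matrix.mul_assoc, trace_mul_comm] at this
  have hTS : (T * S * Tᵀ).trace ≤ (S * T).trace := by
    have := trace_mul_le_trace_mul (mul_self_le_self hT₀ hT₁) hS
    rw [hT]
    rwa [Matrix.mul_assoc, trace_mul_comm, trace_mul_comm T] at this
  have hTS₀ : 0 ≤ (T * S * Tᵀ).trace := (hS.posSemidef.mul_mul_conjTranspose_same T).trace_nonneg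
  have hS₀ : 0 ≤ S.trace := hS.posSemidef.trace_nonneg
  have hD₀ : 0 ≤ opNorm D := norm_nonneg _
  refine abs_le_of_sq_le_sq ?_ (by positivity)
  calc (D * S * T).trace ^ 2 ≤ (D * S * Dᵀ).trace * (T * S * Tᵀ).trace := by
        simpa only [hT] using sq_trace_mul_mul_transpose_le hS D T
    _ ≤ opNorm D ^ 2 * S.trace * (S * T).trace := by gcongr
    _ = (opNorm D * √(S.trace * (S * T).trace)) ^ 2 := by
        rw [mul_pow, Real.sq_sqrt (mul_nonneg hS₀ (hTS₀.trans hTS)), mul_assoc]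

-- `A - B = (1 - B) * A - B * (1 - A)`, and each product pairs a positive weight with a contraction.
lemma trace_mul_sub_le {A B : Matrix ι ι ℝ} (hA₀ : 0 ≤ A) (hA₁ : A ≤ 1) (hB₀ : 0 ≤ B)
    (hB₁ : B ≤ 1) (D : Matrix ι ι ℝ) :
    (D * (A - B)).trace ≤ opNorm D *
      (√(A.trace * (A * (1 - B)).trace) + √(B.trace * (B * (1 - A)).trace)) := by
  have hAt : Aᵀ = A := hA₀.posSemidef.isHermitian
  have hBt : Bᵀ = B := hB₀.posSemidef.isHermitian
  have hflip : (Dᵀ * A * (1 - B)).trace = (D * ((1 - B) * A)).trace := by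
    rw [← trace_transpose, transpose_mul, transpose_mul, transpose_transpose, hAt,
      transpose_sub, transpose_one, hBt, ← Matrix.mul_assoc, trace_mul_comm]
  have hsplit : (D * (A - B)).trace = (Dᵀ * A * (1 - B)).trace - (D * B * (1 - A)).trace := by
    rw [hflip, ← trace_sub]
    noncomm_ring
  have hA := abs_trace_mul_mul_le hA₀ (sub_nonneg.mpr hB₁) (sub_le_self 1 hB₀) Dᵀ
  have hB := abs_trace_mul_mul_le hB₀ (sub_nonneg.mpr hA₁) (sub_le_self 1 hA₀) D
  rw [opNorm_transpose] at hA
  rw [hsplit]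
  linarith [le_abs_self (Dᵀ * A * (1 - B)).trace, neg_abs_le (D * B * (1 - A)).trace]

end LoewnerOrder

section Feasibility

open scoped MatrixOrder

variable {n r : ℕ} {X Y : Matrix (Fin n × Fin r) (Fin n × Fin r) ℝ}

namespace SDPFeasible

lemma transpose_eq_s6 (hX : SDPFeasible X) : Xᵀ = X := hX.1.isHermitian

lemma apply_diag_block (hX : SDPFeasible X) (i : Fin n) (a b : Fin r) :
    X (i, a) (i, b) = if a = b then 1 else 0 := by
  have hsymm : X (i, b) (i, a) = X (i, a) (i, b) := congrFun₂ hX.transpose_eq_s6 (i, a) (i, b)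
  simpa [SBD, hsymm, one_apply] using congrFun₂ hX.2 (i, a) (i, b)

lemma trace_eq (hX : SDPFeasible X) : X.trace = n * r := by
  simp [trace, hX.apply_diag_block]

lemma le_smul_one (hX : SDPFeasible X) : X ≤ (n : ℝ) • 1 := by
  refine le_of_forall_dotProduct_mulVec_le hX.1.isHermitian (by simp [IsHermitian]) fun x => ?_
  let blockPart (i : Fin n) : Fin n × Fin r → ℝ := fun p => if p.1 = i then x p else 0
  have hx : ∑ i, blockPart i = x := by ext p; simp [blockPart, Finset.sum_apply]
  have hblock (i : Fin n) : blockPart i ⬝ᵥ (X *ᵥ blockPart i) = ∑ a, x (i, a) * x (i, a) := by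
    simp [blockPart, dotProduct, mulVec, Fintype.sum_prod_type_right, hX.apply_diag_block]
  calc x ⬝ᵥ (X *ᵥ x) ≤ n * ∑ i, blockPart i ⬝ᵥ (X *ᵥ blockPart i) := by
        simpa only [hx, Finset.card_univ, Fintype.card_fin] using
          dotProduct_mulVec_sum_le hX.1.nonneg Finset.univ blockPart
    _ = x ⬝ᵥ (((n : ℝ) • (1 : Matrix (Fin n × Fin r) (Fin n × Fin r) ℝ)) *ᵥ x) := by
        simp only [hblock, smul_mulVec, one_mulVec, dotProduct_smul, smul_eq_mul]
        simp only [dotProduct, Fintype.sum_prod_type]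

lemma eq_one_of_subsingleton [Subsingleton (Fin n)] (hX : SDPFeasible X) : X = 1 := by
  ext ⟨i, a⟩ ⟨j, b⟩
  obtain rfl := Subsingleton.elim i j
  simp [hX.apply_diag_block, one_apply]

lemma trace_mul_le (hX : SDPFeasible X) (hY : SDPFeasible Y) : (X * Y).trace ≤ n ^ 2 * r := by
  have h := trace_mul_le_trace_mul hX.le_smul_one hY.1.nonneg
  rwa [smul_mul_assoc, one_mul, trace_smul, smul_eq_mul, hY.trace_eq, ← mul_assoc, ← sq] at h

lemma trace_mul_sub_le (hX : SDPFeasible X) (hY : SDPFeasible Y)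
    (D : Matrix (Fin n × Fin r) (Fin n × Fin r) ℝ) :
    (D * (X - Y)).trace ≤ 2 * opNorm D * √(r * (n ^ 2 * r - (X * Y).trace)) := by
  obtain rfl | hn := n.eq_zero_or_pos
  · simp [trace]
  have hn' : (0 : ℝ) < n := Nat.cast_pos.mpr hn
  have hscale {W : Matrix (Fin n × Fin r) (Fin n × Fin r) ℝ} (hW : SDPFeasible W) :
      0 ≤ (n : ℝ)⁻¹ • W ∧ (n : ℝ)⁻¹ • W ≤ 1 :=
    ⟨smul_nonneg (by positivity) hW.1.nonneg, by
      simpa [hn'.ne'] using smul_le_smul_of_nonneg_left hW.le_smul_one (inv_nonneg.mpr hn'.le)⟩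
  have hdefect {V W : Matrix (Fin n × Fin r) (Fin n × Fin r) ℝ} (hV : SDPFeasible V) :
      ((n : ℝ)⁻¹ • V).trace * ((n : ℝ)⁻¹ • V * (1 - (n : ℝ)⁻¹ • W)).trace =
        (n : ℝ)⁻¹ ^ 2 * (r * (n ^ 2 * r - (V * W).trace)) := by
    simp only [mul_sub, mul_one, smul_mul_assoc, mul_smul_comm, trace_sub, trace_smul, smul_eq_mul,
      hV.trace_eq]
    field_simp
  have h := SyncPaper.trace_mul_sub_le (hscale hX).1 (hscale hX).2 (hscale hY).1 (hscale hY).2 D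
  rw [hdefect hX, hdefect hY, trace_mul_comm Y, ← smul_sub, mul_smul_comm, trace_smul, smul_eq_mul,
    Real.sqrt_mul (by positivity), Real.sqrt_sq (by positivity)] at h
  refine le_of_mul_le_mul_left (h.trans_eq ?_) (inv_pos.mpr hn')
  ring

end SDPFeasible

end Feasibility

section TwistedLaplacian

open scoped MatrixOrder

variable {n r : ℕ} (Zb : Fin n → Matrix (Fin r) (Fin r) ℝ)

lemma LZmat_apply (L : Matrix (Fin n) (Fin n) ℝ) (i j : Fin n) (a b : Fin r) :
    LZmat L Zb (i, a) (j, b) = L i j * (Zb i * (Zb j)ᵀ) a b := by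
  simp [LZmat, Dmat, mul_apply, kroneckerMap_apply, Fintype.sum_prod_type_right, one_apply,
    Finset.mul_sum, mul_left_comm, mul_comm]

lemma LZmat_sub (L M : Matrix (Fin n) (Fin n) ℝ) :
    LZmat (L - M) Zb = LZmat L Zb - LZmat M Zb := by
  ext ⟨i, a⟩ ⟨j, b⟩
  simp only [LZmat_apply, Matrix.sub_apply, sub_mul]

lemma LZmat_smul (c : ℝ) (L : Matrix (Fin n) (Fin n) ℝ) :
    LZmat (c • L) Zb = c • LZmat L Zb := by
  ext ⟨i, a⟩ ⟨j, b⟩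
  simp only [LZmat_apply, Matrix.smul_apply, smul_eq_mul, mul_assoc]

lemma LZmat_mono {L M : Matrix (Fin n) (Fin n) ℝ} (h : L ≤ M) :
    LZmat L Zb ≤ LZmat M Zb := by
  rw [← sub_nonneg, ← LZmat_sub]
  exact (((sub_nonneg.mpr h).posSemidef.kronecker .one).mul_mul_conjTranspose_same _).nonneg

lemma LZmat_allOnes : LZmat (of fun _ _ => 1) Zb = Zstack Zb * (Zstack Zb)ᵀ := by
  ext ⟨i, a⟩ ⟨j, b⟩
  simp [LZmat_apply, Zstack, mul_apply]

variable {Zb}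

lemma LZmat_one (hZb : ∀ i, Zb i * (Zb i)ᵀ = 1) : LZmat 1 Zb = 1 := by
  ext ⟨i, a⟩ ⟨j, b⟩
  obtain rfl | hij := eq_or_ne i j
  · simp [LZmat_apply, hZb, one_apply]
  · simp [LZmat_apply, hij]

lemma LZmat_mul_Zstack (hZb : ∀ i, Zb i * (Zb i)ᵀ = 1) {L : Matrix (Fin n) (Fin n) ℝ}
    (hL : L *ᵥ 1 = 0) : LZmat L Zb * Zstack Zb = 0 := by
  have hZb' (j : Fin n) : (Zb j)ᵀ * Zb j = 1 := mul_eq_one_comm.mp (hZb j)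
  ext ⟨i, a⟩ b
  have hrow : ∑ j, L i j = 0 := by simpa [mulVec, dotProduct] using congrFun hL i
  calc (LZmat L Zb * Zstack Zb) (i, a) b = ∑ j, L i j * (Zb i * (Zb j)ᵀ * Zb j) a b := by
        rw [mul_apply, Fintype.sum_prod_type]
        refine Finset.sum_congr rfl fun j _ => ?_
        rw [mul_apply, Finset.mul_sum]
        simp only [LZmat_apply, Zstack, of_apply, mul_assoc]
    _ = (∑ j, L i j) * Zb i a b := by simp only [Matrix.mul_assoc, hZb', mul_one, Finset.sum_mul]
    _ = 0 := by rw [hrow, zero_mul]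

lemma sdpFeasible_Zstack_mul_transpose (hZb : ∀ i, Zb i * (Zb i)ᵀ = 1) :
    SDPFeasible (Zstack Zb * (Zstack Zb)ᵀ) := by
  refine ⟨by simpa using posSemidef_self_mul_conjTranspose (Zstack Zb), ?_⟩
  rw [← LZmat_allOnes]
  ext ⟨i, a⟩ ⟨j, b⟩
  obtain rfl | hij := eq_or_ne i j
  · simp [SBD, LZmat_apply, hZb, one_apply, eq_comm]
  · simp [SBD, hij]

end TwistedLaplacian

section SpectralGap

open scoped MatrixOrder

variable {n : ℕ}

/-- The unit sphere of the hyperplane of vectors orthogonal to the all-ones vector, over which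
`lam2` minimizes the quadratic form. The ambient type `Fin n → ℝ` carries the sup norm, so the
Euclidean normalization is spelled out. -/
def centeredSphere (n : ℕ) : Set (Fin n → ℝ) := {x | ∑ i, x i = 0 ∧ ∑ i, x i ^ 2 = 1}

lemma lam2_eq_sInf_image (L : Matrix (Fin n) (Fin n) ℝ) :
    lam2 L = sInf ((fun x => x ⬝ᵥ (L *ᵥ x)) '' centeredSphere n) := by
  simp only [lam2, centeredSphere, Set.image, Set.mem_ofPred_eq, and_assoc, eq_comm]

lemma isCompact_centeredSphere (n : ℕ) : IsCompact (centeredSphere n) := by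
  refine Metric.isCompact_of_isClosed_isBounded ?_ ?_
  · exact (isClosed_eq (by fun_prop) continuous_const).inter
      (isClosed_eq (by fun_prop) continuous_const)
  · refine (Metric.isBounded_closedBall (x := 0) (r := 1)).subset fun x hx => ?_
    rw [mem_closedBall_zero_iff, pi_norm_le_iff_of_nonneg zero_le_one]
    intro i
    rw [Real.norm_eq_abs, ← sq_le_one_iff_abs_le_one, ← hx.2]
    exact Finset.single_le_sum (f := fun i => x i ^ 2) (fun j _ => sq_nonneg _) (Finset.mem_univ i)

lemma isCompact_image_centeredSphere (L : Matrix (Fin n) (Fin n) ℝ) :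
    IsCompact ((fun x => x ⬝ᵥ (L *ᵥ x)) '' centeredSphere n) :=
  (isCompact_centeredSphere n).image (by fun_prop)

lemma inv_sqrt_smul_mem_centeredSphere {x : Fin n → ℝ} (hx : ∑ i, x i = 0) (hx₀ : x ≠ 0) :
    (√(x ⬝ᵥ x))⁻¹ • x ∈ centeredSphere n := by
  have hpos : 0 < x ⬝ᵥ x := by simpa using dotProduct_star_self_pos_iff.mpr hx₀
  constructor
  · simp only [Pi.smul_apply, ← Finset.smul_sum, hx, smul_zero]
  · simp only [Pi.smul_apply, smul_eq_mul, mul_pow, inv_pow, Real.sq_sqrt hpos.le,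
      ← Finset.mul_sum]
    simpa only [dotProduct, ← sq] using inv_mul_cancel₀ hpos.ne'

lemma centeredSphere_nonempty [Nontrivial (Fin n)] : (centeredSphere n).Nonempty := by
  obtain ⟨p, q, hpq⟩ := exists_pair_ne (Fin n)
  have hne : (Pi.single p 1 - Pi.single q 1 : Fin n → ℝ) ≠ 0 := fun h => by
    simpa [hpq] using congrFun h p
  exact ⟨_, inv_sqrt_smul_mem_centeredSphere (by simp) hne⟩

lemma lam2_mul_dotProduct_self_le (L : Matrix (Fin n) (Fin n) ℝ) {x : Fin n → ℝ}
    (hx : ∑ i, x i = 0) : lam2 L * (x ⬝ᵥ x) ≤ x ⬝ᵥ (L *ᵥ x) := by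
  obtain rfl | hx₀ := eq_or_ne x 0
  · simp
  have hpos : 0 < x ⬝ᵥ x := by simpa using dotProduct_star_self_pos_iff.mpr hx₀
  have hle : lam2 L ≤ (x ⬝ᵥ x)⁻¹ * (x ⬝ᵥ (L *ᵥ x)) := by
    rw [lam2_eq_sInf_image]
    refine csInf_le (isCompact_image_centeredSphere L).bddBelow
      ⟨_, inv_sqrt_smul_mem_centeredSphere hx hx₀, ?_⟩
    simp only [mulVec_smul, smul_dotProduct, dotProduct_smul, smul_eq_mul]
    rw [← mul_assoc, ← mul_inv, Real.mul_self_sqrt hpos.le]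
  rwa [inv_mul_eq_div, le_div_iff₀ hpos] at hle

lemma lam2_pos [Nontrivial (Fin n)] {L : Matrix (Fin n) (Fin n) ℝ} (hL : L.PosSemidef)
    (hker : ∀ x, L *ᵥ x = 0 → ∀ i j, x i = x j) : 0 < lam2 L := by
  rw [lam2_eq_sInf_image]
  obtain ⟨x, ⟨hsum, hunit⟩, hx⟩ :=
    (isCompact_image_centeredSphere L).sInf_mem (centeredSphere_nonempty.image _)
  refine hx ▸ lt_of_le_of_ne (by simpa using hL.dotProduct_mulVec_nonneg x) fun h => ?_
  have hconst := hker x ((hL.dotProduct_mulVec_zero_iff x).mp (by simpa using h.symm))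
  have hzero (i : Fin n) : x i = 0 := by
    have hn : (n : ℝ) ≠ 0 := Nat.cast_ne_zero.mpr i.pos.ne'
    simpa [hconst _ i, hn] using hsum
  simp [hzero] at hunit

lemma lam2_smul_le {L : Matrix (Fin n) (Fin n) ℝ} (hL : L.IsHermitian) (hL₁ : L *ᵥ 1 = 0) :
    lam2 L • (1 - (n : ℝ)⁻¹ • of fun _ _ => 1) ≤ L := by
  obtain rfl | hn := eq_or_ne n 0
  · exact (Subsingleton.elim _ _).le
  have hn' : (n : ℝ) ≠ 0 := Nat.cast_ne_zero.mpr hn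
  set P : Matrix (Fin n) (Fin n) ℝ := 1 - (n : ℝ)⁻¹ • of fun _ _ => 1 with hP
  have hPx (x : Fin n → ℝ) : P *ᵥ x = x - ((n : ℝ)⁻¹ * ∑ i, x i) • 1 := by
    ext i
    simp [hP, mulVec, dotProduct, sub_mul, Finset.sum_sub_distrib, one_apply, Finset.mul_sum]
  have hPsymm : P.IsHermitian := by ext; simp [hP, one_apply, eq_comm]
  have hP₁ : P *ᵥ 1 = 0 := by simp [hPx, hn']
  refine le_of_forall_dotProduct_mulVec_le (hPsymm.smul (.all _)) hL fun x => ?_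
  set y : Fin n → ℝ := x - ((n : ℝ)⁻¹ * ∑ i, x i) • 1
  have hy : ∑ i, y i = 0 := by simp [y, Finset.sum_sub_distrib, hn']
  calc x ⬝ᵥ ((lam2 L • P) *ᵥ x) = lam2 L * (y ⬝ᵥ (P *ᵥ y)) := by
        rw [dotProduct_mulVec_sub_smul_one hPsymm hP₁, smul_mulVec, dotProduct_smul, smul_eq_mul]
    _ = lam2 L * (y ⬝ᵥ y) := by rw [hPx, hy, mul_zero, zero_smul, sub_zero]
    _ ≤ y ⬝ᵥ (L *ᵥ y) := lam2_mul_dotProduct_self_le L hy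
    _ = x ⬝ᵥ (L *ᵥ x) := dotProduct_mulVec_sub_smul_one hL hL₁ x _

end SpectralGap

lemma le_sq_div_sq_of_mul_le_mul_sqrt {a b c : ℝ} (ha : 0 < a) (hc : 0 ≤ c)
    (h : a * c ≤ b * √c) : c ≤ b ^ 2 / a ^ 2 := by
  obtain rfl | hc := hc.eq_or_lt
  · positivity
  have hsqrt : a * √c ≤ b := by
    refine le_of_mul_le_mul_right ?_ (Real.sqrt_pos.mpr hc)
    rwa [mul_assoc, Real.mul_self_sqrt hc.le]
  rw [le_div_iff₀ (by positivity), mul_comm]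
  calc a ^ 2 * c = (a * √c) ^ 2 := by rw [mul_pow, Real.sq_sqrt hc.le]
    _ ≤ b ^ 2 := by gcongr

section ErrorBound

open scoped MatrixOrder

variable {n r : ℕ} {Zb : Fin n → Matrix (Fin r) (Fin r) ℝ}
  {X : Matrix (Fin n × Fin r) (Fin n × Fin r) ℝ}

lemma lam2_mul_defect_le_trace_LZmat_mul {L : Matrix (Fin n) (Fin n) ℝ} (hL : L.IsHermitian)
    (hL₁ : L *ᵥ 1 = 0) (hZb : ∀ i, Zb i * (Zb i)ᵀ = 1) (hX : SDPFeasible X) :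
    lam2 L * (n ^ 2 * r - (X * (Zstack Zb * (Zstack Zb)ᵀ)).trace) ≤
      n * (LZmat L Zb * X).trace := by
  obtain rfl | hn := eq_or_ne n 0
  · simp [trace]
  have hn' : (n : ℝ) ≠ 0 := Nat.cast_ne_zero.mpr hn
  have h := trace_mul_le_trace_mul (LZmat_mono Zb (lam2_smul_le hL hL₁)) hX.1.nonneg
  rw [LZmat_smul, LZmat_sub, LZmat_smul, LZmat_one hZb, LZmat_allOnes, smul_mul_assoc, sub_mul,
    one_mul, smul_mul_assoc, trace_smul, trace_sub, trace_smul, hX.trace_eq, trace_mul_comm _ X,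
    smul_eq_mul, smul_eq_mul] at h
  refine le_trans (le_of_eq ?_) (mul_le_mul_of_nonneg_left h n.cast_nonneg)
  field_simp

lemma trace_LZmat_mul_le_of_ip_le {L : Matrix (Fin n) (Fin n) ℝ} (hL₁ : L *ᵥ 1 = 0)
    (hZb : ∀ i, Zb i * (Zb i)ᵀ = 1) {Δ : Matrix (Fin n × Fin r) (Fin n × Fin r) ℝ}
    (hX : X.IsHermitian)
    (hle : ip (LZmat L Zb - Δ) X ≤ ip (LZmat L Zb - Δ) (Zstack Zb * (Zstack Zb)ᵀ)) :
    (LZmat L Zb * X).trace ≤ (Δ * (X - Zstack Zb * (Zstack Zb)ᵀ)).trace := by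
  have hXt : Xᵀ = X := hX
  have hLZ : LZmat L Zb * (Zstack Zb * (Zstack Zb)ᵀ) = 0 := by
    rw [← Matrix.mul_assoc, LZmat_mul_Zstack hZb hL₁, Matrix.zero_mul]
  simp only [ip, transpose_mul, transpose_transpose, sub_mul, trace_sub, hXt, hLZ, trace_zero]
    at hle
  rw [mul_sub, trace_sub]
  linarith

theorem sdp_error_bound_general {L : Matrix (Fin n) (Fin n) ℝ} (hL : L.PosSemidef)
    (hker : ∀ x, L *ᵥ x = 0 ↔ ∀ i j, x i = x j) (hZb : ∀ i, Zb i * (Zb i)ᵀ = 1)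
    (Δ : Matrix (Fin n × Fin r) (Fin n × Fin r) ℝ) (hX : SDPFeasible X)
    (hle : ip (LZmat L Zb - Δ) X ≤ ip (LZmat L Zb - Δ) (Zstack Zb * (Zstack Zb)ᵀ)) :
    (X * (Zstack Zb * (Zstack Zb)ᵀ)ᵀ).trace ≥
      (1 - 4 * opNorm Δ ^ 2 / lam2 L ^ 2) * ((n : ℝ) ^ 2 * r) := by
  have hZ := sdpFeasible_Zstack_mul_transpose hZb
  rw [hZ.transpose_eq_s6]
  obtain _ | _ := subsingleton_or_nontrivial (Fin n)
  · have hn : (n : ℝ) ^ 2 = n := by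
      have : n ≤ 1 := Fin.subsingleton_iff_le_one.mp inferInstance
      interval_cases n <;> norm_num
    rw [hZ.eq_one_of_subsingleton, mul_one, hX.trace_eq, hn]
    exact mul_le_of_le_one_left (by positivity) (sub_le_self 1 (by positivity))
  have hL₁ : L *ᵥ 1 = 0 := (hker 1).mpr fun _ _ => rfl
  have hlam : 0 < lam2 L := lam2_pos hL fun x => (hker x).mp
  set defect : ℝ := n ^ 2 * r - (X * (Zstack Zb * (Zstack Zb)ᵀ)).trace
  have hgap : lam2 L * defect ≤ n * (LZmat L Zb * X).trace :=
    lam2_mul_defect_le_trace_LZmat_mul hL.isHermitian hL₁ hZb hX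
  have hopt : (LZmat L Zb * X).trace ≤ (Δ * (X - Zstack Zb * (Zstack Zb)ᵀ)).trace :=
    trace_LZmat_mul_le_of_ip_le hL₁ hZb hX.1.isHermitian hle
  have hnoise : (Δ * (X - Zstack Zb * (Zstack Zb)ᵀ)).trace ≤ 2 * opNorm Δ * √(r * defect) :=
    hX.trace_mul_sub_le hZ Δ
  have hdefect : defect ≤ (2 * n * opNorm Δ * √r) ^ 2 / lam2 L ^ 2 := by
    refine le_sq_div_sq_of_mul_le_mul_sqrt hlam (sub_nonneg.mpr (hX.trace_mul_le hZ)) ?_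
    rw [Real.sqrt_mul r.cast_nonneg] at hnoise
    linarith [mul_le_mul_of_nonneg_left (hopt.trans hnoise) n.cast_nonneg (α := ℝ)]
  calc (X * (Zstack Zb * (Zstack Zb)ᵀ)).trace = n ^ 2 * r - defect := (sub_sub_cancel _ _).symm
    _ ≥ n ^ 2 * r - (2 * n * opNorm Δ * √r) ^ 2 / lam2 L ^ 2 := sub_le_sub_left hdefect _
    _ = (1 - 4 * opNorm Δ ^ 2 / lam2 L ^ 2) * (n ^ 2 * r) := by
        rw [mul_pow, Real.sq_sqrt r.cast_nonneg]
        ring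

end ErrorBound

/-- **Corollary 1.8 (error bound for the SDP relaxation).**  Suppose `G` is connected.  Then
every optimal solution `X` of the SDP relaxation satisfies
`⟨X, Z Zᵀ⟩ ≥ (1 − 4‖Δ‖²/λ₂²) n² r`. -/
theorem sdp_error_bound
    (n r : ℕ) (hn : 1 ≤ n) (hr : 1 ≤ r)
    (G : SimpleGraph (Fin n)) [DecidableRel G.Adj] (hG : G.Connected)
    (Zb : Fin n → Matrix (Fin r) (Fin r) ℝ) (hZb : ∀ i, Zb i * (Zb i)ᵀ = 1)
    (Δ : Matrix (Fin n × Fin r) (Fin n × Fin r) ℝ) (hΔsym : Δᵀ = Δ)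
    (hΔsupp : ∀ q q' : Fin n × Fin r, ¬ G.Adj q.1 q'.1 → Δ q q' = 0)
    (Lhat : Matrix (Fin n × Fin r) (Fin n × Fin r) ℝ)
    (hLhat : Lhat = LZmat (G.lapMatrix ℝ) Zb - Δ)
    (X : Matrix (Fin n × Fin r) (Fin n × Fin r) ℝ) (hX : SDPFeasible X)
    (hXopt : ∀ X' : Matrix (Fin n × Fin r) (Fin n × Fin r) ℝ, SDPFeasible X' →
      ip Lhat X ≤ ip Lhat X') :
    (X * (Zstack Zb * (Zstack Zb)ᵀ)ᵀ).trace ≥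
      (1 - 4 * opNorm Δ ^ 2 / lam2 (G.lapMatrix ℝ) ^ 2) * ((n : ℝ) ^ 2 * r) :=
  sdp_error_bound_general (SimpleGraph.posSemidef_lapMatrix ℝ G)
    (fun x => by
      simp [SimpleGraph.lapMatrix_mulVec_eq_zero_iff_forall_reachable, hG.preconnected _ _])
    hZb Δ hX (hLhat ▸ hXopt _ (sdpFeasible_Zstack_mul_transpose hZb))

end SyncPaper
end

section
/- (Key second-order inequality, noiseless case.) Suppose the cost matrix is L̂ = L ⊗ I_r (i.e., Δ = 0 and all Z_i = I_r). Then every second-order critical point Y of the rank-p problem min{⟨L̂, Y Yᵀ⟩ : Y feasible} satisfies (p − r − 2) Σ_{i,j=1}^n L_ij tr(Y_i Y_jᵀ) + (1/4) Σ_{i,j=1}^n A_ij ‖Y_i − Y_j‖_F⁴ ≤ 0, where ‖·‖_F is the Frobenius norm. -/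
open Matrix MeasureTheory ProbabilityTheory
open scoped Kronecker BigOperators

/-!
For a fixed `Γ ∈ ℝ^{r×p}`, the blocks `Γ - Y_i Γᵀ Y_i` form a tangent direction at `Y`. Summing
`Ẏ_i Ẏ_jᵀ` over the directions given by the elementary matrices `Γ = E_ab` yields
`(p - 2) I_r + t_ij Y_i Y_jᵀ` with `t_ij = tr(Y_i Y_jᵀ)`, so the curvature condition becomes
`0 ≤ ∑ A_ij (r - t_ij) (t_ij - (p - 2))`. Since `‖Y_i - Y_j‖_F² = 2 (r - t_ij)`, this is the claim.
-/

namespace SyncPaper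

section ElementaryMatrices

variable {m n R : Type*} [Fintype m] [Fintype n] [DecidableEq m] [DecidableEq n]

theorem sum_single_mul_mul_single [Semiring R] (M : Matrix n m R) :
    ∑ a : m, ∑ b : n, single a b (1 : R) * M * single a b (1 : R) = Mᵀ := by
  simp only [single_mul_mul_single, one_mul, mul_one, sum_sum_single]
  rfl

theorem sum_single_mul_mul_transpose_single [Semiring R] (M : Matrix n n R) :
    ∑ a : m, ∑ b : n, single a b (1 : R) * M * (single a b (1 : R))ᵀ =
      M.trace • (1 : Matrix m m R) := by
  simp only [transpose_single, single_mul_mul_single, one_mul, mul_one]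
  rw [Finset.sum_comm]
  simp only [sum_single_eq_diagonal, ← smul_one_eq_diagonal, ← Finset.sum_smul]
  rfl

end ElementaryMatrices

section StiefelTangent

variable {m n R : Type*} [Fintype m] [Fintype n] [CommRing R]

/-- The tangent vector `Γ - U Γᵀ U` at a matrix `U` with orthonormal rows, that is, at a point of
the Stiefel manifold `U Uᵀ = 1`. -/
def stiefelTangent (U Γ : Matrix m n R) : Matrix m n R :=
  Γ - U * Γᵀ * U

theorem stiefelTangent_mul_transpose_add [DecidableEq m] {U : Matrix m n R} (hU : U * Uᵀ = 1)
    (Γ : Matrix m n R) :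
    stiefelTangent U Γ * Uᵀ + U * (stiefelTangent U Γ)ᵀ = 0 := by
  have mul_cancel : U * (Uᵀ * (Γ * Uᵀ)) = Γ * Uᵀ := by rw [← Matrix.mul_assoc, hU, Matrix.one_mul]
  simp only [stiefelTangent, transpose_sub, transpose_mul, transpose_transpose, Matrix.sub_mul,
    Matrix.mul_sub, Matrix.mul_assoc, hU, mul_cancel, Matrix.mul_one]
  abel

theorem stiefelTangent_mul_transpose (U V Γ : Matrix m n R) :
    stiefelTangent U Γ * (stiefelTangent V Γ)ᵀ =
      Γ * Γᵀ - Γ * Vᵀ * Γ * Vᵀ - U * (Γᵀ * U * Γᵀ) + U * (Γᵀ * (U * Vᵀ) * Γ) * Vᵀ := by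
  simp only [stiefelTangent, transpose_sub, transpose_mul, transpose_transpose, Matrix.sub_mul,
    Matrix.mul_sub, Matrix.mul_assoc]
  abel

variable [DecidableEq m] [DecidableEq n]

theorem sum_stiefelTangent_single_mul_transpose {U V : Matrix m n R} (hU : U * Uᵀ = 1)
    (hV : V * Vᵀ = 1) :
    ∑ a : m, ∑ b : n, stiefelTangent U (single a b (1 : R)) *
        (stiefelTangent V (single a b (1 : R)))ᵀ =
      ((Fintype.card n : R) - 2) • (1 : Matrix m m R) + (U * Vᵀ).trace • (U * Vᵀ) := by
  have sum_ΓΓt : ∑ a : m, ∑ b : n, single a b (1 : R) * (single a b (1 : R))ᵀ =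
      (Fintype.card n : R) • 1 := by
    simpa only [Matrix.mul_one, trace_one] using
      sum_single_mul_mul_transpose_single (m := m) (1 : Matrix n n R)
  have sum_ΓVtΓ : ∑ a : m, ∑ b : n, single a b (1 : R) * Vᵀ * single a b (1 : R) = V :=
    sum_single_mul_mul_single Vᵀ
  have sum_ΓtUΓt : ∑ a : m, ∑ b : n, (single a b (1 : R))ᵀ * U * (single a b (1 : R))ᵀ = Uᵀ := by
    simp only [transpose_single]
    rw [Finset.sum_comm, sum_single_mul_mul_single]
  have sum_ΓtUVtΓ : ∑ a : m, ∑ b : n, (single a b (1 : R))ᵀ * (U * Vᵀ) * single a b (1 : R) =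
      (U * Vᵀ).trace • (1 : Matrix n n R) := by
    rw [Finset.sum_comm, ← sum_single_mul_mul_transpose_single]
    simp only [transpose_single]
  simp only [stiefelTangent_mul_transpose, Finset.sum_add_distrib, Finset.sum_sub_distrib,
    ← Matrix.sum_mul, ← Matrix.mul_sum, sum_ΓΓt, sum_ΓVtΓ, sum_ΓtUΓt, sum_ΓtUVtΓ, hU, hV,
    Matrix.mul_smul, Matrix.smul_mul, Matrix.mul_one]
  module

end StiefelTangent

section Frobenius

variable {m n : Type*} [Fintype m] [Fintype n]

theorem trace_mul_transpose_comm {R : Type*} [NonUnitalNonAssocCommSemiring R]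
    (A B : Matrix m n R) : (A * Bᵀ).trace = (B * Aᵀ).trace := by
  rw [← trace_transpose, transpose_mul, transpose_transpose]

theorem frobSq_eq_trace (A : Matrix m n ℝ) : frobSq A = (A * Aᵀ).trace := by
  simp only [frobSq, trace, diag_apply, mul_apply, transpose_apply, sq]

theorem frobSq_sub (A B : Matrix m n ℝ) :
    frobSq (A - B) = (A * Aᵀ).trace - 2 * (A * Bᵀ).trace + (B * Bᵀ).trace := by
  simp only [frobSq_eq_trace, transpose_sub, Matrix.sub_mul, Matrix.mul_sub, trace_sub]
  rw [trace_mul_transpose_comm B A]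
  ring

end Frobenius

section Blocks

variable {n r p : ℕ}

theorem trace_mul_mul_transpose_eq_sum_blk {R : Type*} [NonUnitalSemiring R]
    (S : Matrix (Fin n × Fin r) (Fin n × Fin r) R) (X : Matrix (Fin n × Fin r) (Fin p) R) :
    (S * X * Xᵀ).trace =
      ∑ i, ∑ j, (S.submatrix (Prod.mk i) (Prod.mk j) * (blk X j * (blk X i)ᵀ)).trace := by
  simp only [Matrix.mul_assoc S, trace, diag_apply, mul_apply (M := S), Fintype.sum_prod_type]
  refine Finset.sum_congr rfl fun i _ => ?_
  rw [Finset.sum_comm]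
  rfl

theorem submatrix_kronecker_one {R : Type*} [MulZeroOneClass R] (L : Matrix (Fin n) (Fin n) R)
    (i j : Fin n) :
    (L ⊗ₖ (1 : Matrix (Fin r) (Fin r) R)).submatrix (Prod.mk i) (Prod.mk j) = L i j • 1 :=
  rfl

theorem submatrix_SBD (M : Matrix (Fin n × Fin r) (Fin n × Fin r) ℝ) (i j : Fin n) :
    (SBD M).submatrix (Prod.mk i) (Prod.mk j) =
      if i = j then (1 / 2 : ℝ) • (M.submatrix (Prod.mk i) (Prod.mk i) +
        (M.submatrix (Prod.mk i) (Prod.mk i))ᵀ) else 0 := by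
  ext a b
  split_ifs with hij
  · subst hij
    simp only [SBD, submatrix_apply, of_apply, if_true, Matrix.smul_apply, Matrix.add_apply,
      transpose_apply, smul_eq_mul]
    ring
  · simp [SBD, hij]

theorem trace_kronecker_one_mul_mul_transpose {R : Type*} [CommSemiring R]
    (L : Matrix (Fin n) (Fin n) R) (X : Matrix (Fin n × Fin r) (Fin p) R) :
    ((L ⊗ₖ (1 : Matrix (Fin r) (Fin r) R)) * X * Xᵀ).trace =
      ∑ i, ∑ j, L i j * (blk X i * (blk X j)ᵀ).trace := by
  rw [trace_mul_mul_transpose_eq_sum_blk]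
  simp only [submatrix_kronecker_one, Matrix.smul_mul, Matrix.one_mul, trace_smul, smul_eq_mul]
  exact Finset.sum_congr rfl fun i _ => Finset.sum_congr rfl fun j _ => by
    rw [trace_mul_transpose_comm]

/-- The tangent direction at the block matrix `Y` whose `i`-th block is `Γ - Y_i Γᵀ Y_i`, the same
`Γ` being used for all blocks. -/
def tangentDirection {R : Type*} [CommRing R] (Y : Matrix (Fin n × Fin r) (Fin p) R)
    (Γ : Matrix (Fin r) (Fin p) R) : Matrix (Fin n × Fin r) (Fin p) R :=
  Matrix.of fun q => stiefelTangent (blk Y q.1) Γ q.2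

theorem blk_tangentDirection {R : Type*} [CommRing R] (Y : Matrix (Fin n × Fin r) (Fin p) R)
    (Γ : Matrix (Fin r) (Fin p) R) (i : Fin n) :
    blk (tangentDirection Y Γ) i = stiefelTangent (blk Y i) Γ :=
  rfl

variable {Y : Matrix (Fin n × Fin r) (Fin p) ℝ}

theorem Feasible.trace_blk_mul_transpose (hY : Feasible Y) (i : Fin n) :
    (blk Y i * (blk Y i)ᵀ).trace = r := by
  rw [hY i, trace_one, Fintype.card_fin]

theorem Feasible.frobSq_blk_sub (hY : Feasible Y) (i j : Fin n) :
    frobSq (blk Y i - blk Y j) = 2 * (r - (blk Y i * (blk Y j)ᵀ).trace) := by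
  rw [frobSq_sub, hY.trace_blk_mul_transpose, hY.trace_blk_mul_transpose]
  ring

theorem Feasible.sum_trace_mul_tangentDirection (hY : Feasible Y)
    (S : Matrix (Fin n × Fin r) (Fin n × Fin r) ℝ) :
    ∑ a, ∑ b, (S * tangentDirection Y (single a b 1) *
        (tangentDirection Y (single a b 1))ᵀ).trace =
      ∑ i, ∑ j, (S.submatrix (Prod.mk i) (Prod.mk j) *
        (((p : ℝ) - 2) • 1 +
          (blk Y j * (blk Y i)ᵀ).trace • (blk Y j * (blk Y i)ᵀ))).trace := by
  simp only [trace_mul_mul_transpose_eq_sum_blk, blk_tangentDirection]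
  rw [Finset.sum_comm_cycle]
  refine Finset.sum_congr rfl fun i _ => ?_
  rw [Finset.sum_comm_cycle]
  refine Finset.sum_congr rfl fun j _ => ?_
  have gram := sum_stiefelTangent_single_mul_transpose (hY j) (hY i)
  rw [Fintype.card_fin] at gram
  simp only [← gram, Matrix.mul_sum, trace_sum]

theorem Feasible.sum_trace_kronecker_one_mul_tangentDirection (hY : Feasible Y)
    (L : Matrix (Fin n) (Fin n) ℝ) :
    ∑ a, ∑ b, ((L ⊗ₖ (1 : Matrix (Fin r) (Fin r) ℝ)) * tangentDirection Y (single a b 1) *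
        (tangentDirection Y (single a b 1))ᵀ).trace =
      ∑ i, ∑ j, L i j * ((p - 2) * r + (blk Y i * (blk Y j)ᵀ).trace ^ 2) := by
  rw [hY.sum_trace_mul_tangentDirection]
  refine Finset.sum_congr rfl fun i _ => Finset.sum_congr rfl fun j _ => ?_
  rw [trace_mul_transpose_comm (blk Y i)]
  simp only [submatrix_kronecker_one, Matrix.smul_mul, Matrix.one_mul, trace_smul, trace_add,
    trace_one, Fintype.card_fin, smul_eq_mul]
  ring

theorem Feasible.sum_trace_SBD_mul_tangentDirection (hY : Feasible Y)
    (M : Matrix (Fin n × Fin r) (Fin n × Fin r) ℝ) :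
    ∑ a, ∑ b, (SBD M * tangentDirection Y (single a b 1) *
        (tangentDirection Y (single a b 1))ᵀ).trace =
      (p - 2 + r) * M.trace := by
  have trace_eq : M.trace = ∑ i, (M.submatrix (Prod.mk i) (Prod.mk i)).trace :=
    Fintype.sum_prod_type _
  rw [hY.sum_trace_mul_tangentDirection, trace_eq, Finset.mul_sum]
  refine Finset.sum_congr rfl fun i _ => ?_
  simp only [submatrix_SBD, ite_mul, Matrix.zero_mul]
  rw [Fintype.sum_eq_single i fun j hij => by rw [if_neg hij.symm, trace_zero],
    if_pos rfl, hY i, ← add_smul]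
  simp only [Matrix.mul_smul, Matrix.mul_one, trace_smul, trace_add, trace_transpose, trace_one,
    Fintype.card_fin, smul_eq_mul]
  ring

theorem Feasible.sum_trace_Smat_mul_tangentDirection (hY : Feasible Y)
    (L : Matrix (Fin n) (Fin n) ℝ) :
    ∑ a, ∑ b, (Smat (L ⊗ₖ (1 : Matrix (Fin r) (Fin r) ℝ)) Y * tangentDirection Y (single a b 1) *
        (tangentDirection Y (single a b 1))ᵀ).trace =
      ∑ i, ∑ j, L i j * ((p - 2) * r + (blk Y i * (blk Y j)ᵀ).trace ^ 2) -
        (p - 2 + r) * ∑ i, ∑ j, L i j * (blk Y i * (blk Y j)ᵀ).trace := by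
  simp only [Smat, Matrix.sub_mul, trace_sub, Finset.sum_sub_distrib]
  rw [hY.sum_trace_kronecker_one_mul_tangentDirection, hY.sum_trace_SBD_mul_tangentDirection,
    trace_kronecker_one_mul_mul_transpose]

end Blocks

section Laplacian

variable {V : Type*} [Fintype V] [DecidableEq V]

/-- The Laplacian `diag(W·1) - W` of a weight matrix `W`, whose entries may have any sign. Diagonal
weights cancel. -/
def weightedLaplacian {R : Type*} [NonAssocRing R] (W : Matrix V V R) : Matrix V V R :=
  diagonal (W *ᵥ 1) - W

theorem lapMatrix_eq_weightedLaplacian {R : Type*} [NonAssocRing R] (G : SimpleGraph V)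
    [DecidableRel G.Adj] :
    G.lapMatrix R = weightedLaplacian (G.adjMatrix R) := by
  ext i j
  simp [SimpleGraph.lapMatrix, SimpleGraph.degMatrix, weightedLaplacian, diagonal_apply,
    SimpleGraph.adjMatrix_mulVec_apply]

theorem sum_weightedLaplacian_mul {R : Type*} [NonAssocRing R] (W : Matrix V V R)
    (f : V → V → R) :
    ∑ i, ∑ j, weightedLaplacian W i j * f i j = ∑ i, ∑ j, W i j * (f i i - f i j) := by
  refine Finset.sum_congr rfl fun i _ => ?_
  simp [weightedLaplacian, sub_mul, mul_sub, diagonal_apply, mulVec, dotProduct, Finset.sum_mul]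

end Laplacian

theorem noiseless_second_order_inequality_general {n r p : ℕ} (W : Matrix (Fin n) (Fin n) ℝ)
    {Y : Matrix (Fin n × Fin r) (Fin p) ℝ} (hY : Feasible Y)
    (hcurv : ∀ Ydot : Matrix (Fin n × Fin r) (Fin p) ℝ,
      (∀ i, blk Ydot i * (blk Y i)ᵀ + blk Y i * (blk Ydot i)ᵀ = 0) →
      0 ≤ (Smat (weightedLaplacian W ⊗ₖ (1 : Matrix (Fin r) (Fin r) ℝ)) Y *
        Ydot * Ydotᵀ).trace) :
    ((p : ℝ) - r - 2) *
        (∑ i, ∑ j, weightedLaplacian W i j * (blk Y i * (blk Y j)ᵀ).trace)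
      + (1 / 4) * (∑ i, ∑ j, W i j * (frobSq (blk Y i - blk Y j)) ^ 2) ≤ 0 := by
  let t (i j : Fin n) : ℝ := (blk Y i * (blk Y j)ᵀ).trace
  have t_self (i : Fin n) : t i i = r := hY.trace_blk_mul_transpose i
  have frobSq_eq (i j : Fin n) : frobSq (blk Y i - blk Y j) = 2 * (r - t i j) :=
    hY.frobSq_blk_sub i j
  have curvature_sum_nonneg :
      0 ≤ ∑ i, ∑ j, weightedLaplacian W i j * ((p - 2) * r + t i j ^ 2) -
        (p - 2 + r) * ∑ i, ∑ j, weightedLaplacian W i j * t i j := by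
    refine le_of_le_of_eq ?_ (hY.sum_trace_Smat_mul_tangentDirection _)
    exact Finset.sum_nonneg fun a _ => Finset.sum_nonneg fun b _ =>
      hcurv _ fun i => stiefelTangent_mul_transpose_add (hY i) (single a b 1)
  have weighted_sum_nonneg : 0 ≤ ∑ i, ∑ j, W i j * ((r - t i j) * (t i j - (p - 2))) := by
    refine curvature_sum_nonneg.trans_eq ?_
    rw [sum_weightedLaplacian_mul W t,
      sum_weightedLaplacian_mul W fun i j => (p - 2) * r + t i j ^ 2]
    simp only [t_self, Finset.mul_sum, ← Finset.sum_sub_distrib]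
    exact Finset.sum_congr rfl fun i _ => Finset.sum_congr rfl fun j _ => by ring
  rw [← neg_nonneg]
  refine weighted_sum_nonneg.trans_eq ?_
  change _ = -((p - r - 2) * (∑ i, ∑ j, weightedLaplacian W i j * t i j) + _)
  simp only [sum_weightedLaplacian_mul W t, t_self, frobSq_eq, Finset.mul_sum,
    ← Finset.sum_add_distrib, ← Finset.sum_neg_distrib]
  exact Finset.sum_congr rfl fun i _ => Finset.sum_congr rfl fun j _ => by ring

/-- **Key second-order inequality, noiseless case.**  If the cost matrix is `L̂ = L ⊗ I_r`
(i.e. `Δ = 0` and all `Z_i = I_r`), then every second-order critical point `Y` of the rank-`p`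
problem satisfies
`(p − r − 2) Σ_{ij} L_ij tr(Y_i Y_jᵀ) + (1/4) Σ_{ij} A_ij ‖Y_i − Y_j‖_F⁴ ≤ 0`. -/
theorem noiseless_second_order_inequality
    (n r p : ℕ) (hn : 1 ≤ n) (hr : 1 ≤ r) (hrp : r ≤ p)
    (G : SimpleGraph (Fin n)) [DecidableRel G.Adj]
    (Lhat : Matrix (Fin n × Fin r) (Fin n × Fin r) ℝ)
    (hLhat : Lhat = (G.lapMatrix ℝ) ⊗ₖ (1 : Matrix (Fin r) (Fin r) ℝ))
    (Y : Matrix (Fin n × Fin r) (Fin p) ℝ)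
    (hY : IsSecondOrderCritical Lhat Y) :
    ((p : ℝ) - r - 2) *
        (∑ i, ∑ j, G.lapMatrix ℝ i j * (blk Y i * (blk Y j)ᵀ).trace)
      + (1 / 4) *
        (∑ i, ∑ j, G.adjMatrix ℝ i j * (frobSq (blk Y i - blk Y j)) ^ 2) ≤ 0 := by
  subst hLhat
  rw [lapMatrix_eq_weightedLaplacian] at hY ⊢
  exact noiseless_second_order_inequality_general (G.adjMatrix ℝ) hY.1 hY.2.2

end SyncPaper
end
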